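/- arXiv:2011.05006 — 2 statements merged into one kernel-verified Lean document; each statement's English description precedes it below -/
import Mathlib

section
/- For all real numbers q̃, t, z with 0 < q̃ < 1, t ≥ 1 and z > 0, one has 2·S_even(q̃,t)·Σ_{ℓ∈ℤ} q̃^{ℓ(ℓ+1)} z^{2ℓ} = Π_{i≥1} (1 + t·z·q̃^i + z²·q̃^{2i})·(1 + t·z⁻¹·q̃^{i−1} + z⁻²·q̃^{2(i−1)}) + Π_{i≥1} (1 − t·z·q̃^i + z²·q̃^{2i})·(1 − t·z⁻¹·q̃^{i−1} + z⁻²·q̃^{2(i−1)}), where the sum over ℓ and the infinite products converge absolutely. -/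
/-!
Both infinite products are expanded as sums over configurations of particles on `ℤ` with at most
two particles per site, all sites being full far to the left and empty far to the right. A
configuration has weight `t ^ k * z ^ c * q ^ e`, where `k` is the number of singly occupied sites,
`c` the charge and `e` the energy, the last two relative to the vacuum in which exactly the sites
`s ≤ 0` are full (`wt_formula`, `tsum_wt`). Adding the products at `z` and `-z` cancels the
configurations of odd charge and doubles those of even charge.

Number the particles from right to left and let `ω n` be the distance between the particles `n` and
`n + 1`. At most two particles per site means that no two consecutive gaps vanish, and for even
charge the gaps agree far to the left with the vacuum pattern defining `He`. A configuration of
charge `2 * l` is determined by `l` and its gaps, so configurations of even charge are in bijection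
with `ℤ × He` (`GapRel`, `exists_config`, `exists_gaps`, and the two uniqueness lemmas). Summation
by parts shows that the energy is `l * (l + 1) + Afun ω`, and counting doubly occupied sites as
vanishing gaps shows that the number of singly occupied sites is `Bfun ω` (`GapRel.stats`). The sum
over `ℤ × He` therefore factors into the theta series and `Seven q t`.
-/

open scoped BigOperators

/-- `He` is the set of sequences `(ω_{-i})_{i ≥ 1}` of non-negative integers (indexed here by
`n : ℕ` with `i = n + 1`) with no two consecutive vanishing entries, agreeing for large `i`
with the sequence which is `1` at even `i` and `0` at odd `i`. -/
def He : Set (ℕ → ℕ) :=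
  {ω | (∀ n : ℕ, ¬(ω n = 0 ∧ ω (n + 1) = 0)) ∧
       (∃ N : ℕ, ∀ n ≥ N, ω n = if (n + 1) % 2 = 0 then 1 else 0)}

/-- `Ho` is as `He`, but agreeing for large `i` with the sequence which is `1` at odd `i`
and `0` at even `i`. -/
def Ho : Set (ℕ → ℕ) :=
  {ω | (∀ n : ℕ, ¬(ω n = 0 ∧ ω (n + 1) = 0)) ∧
       (∃ N : ℕ, ∀ n ≥ N, ω n = if (n + 1) % 2 = 1 then 1 else 0)}

/-- `A(ω) = Σ_{i odd} i·ω_{-i} + Σ_{i even} i·(ω_{-i} − 1)`. -/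
noncomputable def Afun (ω : ℕ → ℕ) : ℤ :=
  ∑ᶠ n : ℕ, (if (n + 1) % 2 = 1 then ((n : ℤ) + 1) * (ω n : ℤ)
             else ((n : ℤ) + 1) * ((ω n : ℤ) - 1))

/-- `B(ω) = 2·(Σ_{i odd} 1{ω_{-i} ≥ 1} − Σ_{i even} 1{ω_{-i} = 0})`. -/
noncomputable def Bfun (ω : ℕ → ℕ) : ℤ :=
  2 * ((∑ᶠ n : ℕ, if (n + 1) % 2 = 1 ∧ 1 ≤ ω n then (1 : ℤ) else 0)
     - (∑ᶠ n : ℕ, if (n + 1) % 2 = 0 ∧ ω n = 0 then (1 : ℤ) else 0))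

/-- `A'(ω) = Σ_{i even} i·ω_{-i} + Σ_{i odd} i·(ω_{-i} − 1)`. -/
noncomputable def A'fun (ω : ℕ → ℕ) : ℤ :=
  ∑ᶠ n : ℕ, (if (n + 1) % 2 = 0 then ((n : ℤ) + 1) * (ω n : ℤ)
             else ((n : ℤ) + 1) * ((ω n : ℤ) - 1))

/-- `B'(ω) = 2·(Σ_{i even} 1{ω_{-i} ≥ 1} − Σ_{i odd} 1{ω_{-i} = 0})`. -/
noncomputable def B'fun (ω : ℕ → ℕ) : ℤ :=
  2 * ((∑ᶠ n : ℕ, if (n + 1) % 2 = 0 ∧ 1 ≤ ω n then (1 : ℤ) else 0)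
     - (∑ᶠ n : ℕ, if (n + 1) % 2 = 1 ∧ ω n = 0 then (1 : ℤ) else 0))

/-- `S_even(q̃, t) = Σ_{ω ∈ H_e} q̃^{A(ω)} t^{B(ω)}`. -/
noncomputable def Seven (q t : ℝ) : ℝ := ∑' ω : He, q ^ Afun ω.1 * t ^ Bfun ω.1

/-- `S_odd(q̃, t) = Σ_{ω ∈ H_o} q̃^{A'(ω)} t^{B'(ω)}`. -/
noncomputable def Sodd (q t : ℝ) : ℝ := ∑' ω : Ho, q ^ A'fun ω.1 * t ^ B'fun ω.1

open Filter Topology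

/-! ### Configurations and their weights -/

/-- Number of particles at site `s` in the configuration `δ`, which records particles at the
sites `s ≥ 1` and holes (out of two) at the sites `s ≤ 0`. -/
def occ (δ : ℤ →₀ Fin 3) (s : ℤ) : ℕ := if 1 ≤ s then (δ s : ℕ) else 2 - (δ s : ℕ)

/-- Occupation numbers of the vacuum: two particles at each site `s ≤ 0`, none elsewhere. -/
def vac (s : ℤ) : ℤ := if 1 ≤ s then 0 else 2

/-- Fugacity of one excitation at site `s`: a particle if `s ≥ 1`, a hole if `s ≤ 0`. -/
noncomputable def fug (q z : ℝ) (s : ℤ) : ℝ := if 1 ≤ s then z * q ^ s else z⁻¹ * q ^ (-s)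

/-- Weight of `d` excitations at site `s`; a single excitation carries the extra factor `t`. -/
noncomputable def siteWt (q t z : ℝ) (s : ℤ) (d : Fin 3) : ℝ :=
  (if d = 1 then t else 1) * fug q z s ^ (d : ℕ)

/-- Weight of a configuration: the product of the weights of its sites. -/
noncomputable def wt (q t z : ℝ) (δ : ℤ →₀ Fin 3) : ℝ := δ.prod (siteWt q t z)

/-- The finite set of sites `-K < s ≤ K`. -/
noncomputable def win (K : ℕ) : Finset ℤ := Finset.Ioc (-(K : ℤ)) K

lemma occ_le (δ : ℤ →₀ Fin 3) (s : ℤ) : occ δ s ≤ 2 := by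
  unfold occ; have := (δ s).isLt; split_ifs <;> omega

lemma siteWt_zero (q t z : ℝ) (s : ℤ) : siteWt q t z s 0 = 1 := by simp [siteWt]

lemma wt_eq_prod (q t z : ℝ) (δ : ℤ →₀ Fin 3) {W : Finset ℤ} (h : δ.support ⊆ W) :
    wt q t z δ = ∏ s ∈ W, siteWt q t z s (δ s) :=
  Finsupp.prod_of_support_subset δ h _ fun s _ => siteWt_zero q t z s

lemma siteWt_eq (q t z : ℝ) (δ : ℤ →₀ Fin 3) (s : ℤ) :
    siteWt q t z s (δ s) =
      t ^ (if occ δ s = 1 then 1 else 0 : ℕ) * z ^ ((occ δ s : ℤ) - vac s) *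
        q ^ (s * ((occ δ s : ℤ) - vac s)) := by
  unfold siteWt fug occ vac
  generalize δ s = d
  by_cases h1 : 1 ≤ s
  · simp only [if_pos h1]
    fin_cases d
    · simp
    · simp; ring
    · simp [mul_pow, zpow_mul]
  · simp only [if_neg h1]
    fin_cases d
    · simp
    · simp; ring
    · simp [mul_pow, zpow_mul]

lemma prod_zpow_sum {ι : Type*} (a : ℝ) (ha : a ≠ 0) (W : Finset ι) (e : ι → ℤ) :
    ∏ s ∈ W, a ^ e s = a ^ ∑ s ∈ W, e s := by
  classical
  induction W using Finset.induction_on with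
  | empty => simp
  | insert x W hx ih => rw [Finset.prod_insert hx, Finset.sum_insert hx, ih, zpow_add₀ ha]

/-- The weight is a monomial in `t`, `z` and `q`, whose exponents are the number of singly
occupied sites, the charge and the energy relative to the vacuum. -/
lemma wt_formula (q t z : ℝ) (hq : 0 < q) (hz : z ≠ 0) (δ : ℤ →₀ Fin 3) {W : Finset ℤ}
    (h : δ.support ⊆ W) :
    wt q t z δ = t ^ (∑ s ∈ W, if occ δ s = 1 then 1 else 0 : ℕ) *
      z ^ (∑ s ∈ W, ((occ δ s : ℤ) - vac s)) * q ^ (∑ s ∈ W, s * ((occ δ s : ℤ) - vac s)) := by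
  rw [wt_eq_prod q t z δ h, Finset.prod_congr rfl fun s _ => siteWt_eq q t z δ s,
    Finset.prod_mul_distrib, Finset.prod_mul_distrib, prod_zpow_sum z hz,
    prod_zpow_sum q hq.ne', Finset.prod_pow_eq_pow_sum]

lemma exists_win (δ : ℤ →₀ Fin 3) : ∃ K : ℕ, ∀ K' ≥ K, δ.support ⊆ win K' := by
  refine ⟨(∑ s ∈ δ.support, s.natAbs) + 1, fun K' hK s hs => ?_⟩
  have := Finset.single_le_sum (f := fun s : ℤ => s.natAbs) (fun _ _ => Nat.zero_le _) hs
  simp only [win, Finset.mem_Ioc]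
  omega

lemma wt_pos (q t z : ℝ) (hq : 0 < q) (ht : 1 ≤ t) (hz : 0 < z) (δ : ℤ →₀ Fin 3) :
    0 < wt q t z δ := by
  rw [wt_formula q t z hq hz.ne' δ subset_rfl]
  have : 0 < t := by linarith
  positivity

lemma wt_neg_of_even (q t z : ℝ) (hq : 0 < q) (hz : z ≠ 0) (δ : ℤ →₀ Fin 3) {W : Finset ℤ}
    (h : δ.support ⊆ W) (he : Even (∑ s ∈ W, ((occ δ s : ℤ) - vac s))) :
    wt q t (-z) δ = wt q t z δ := by
  rw [wt_formula q t z hq hz δ h, wt_formula q t (-z) hq (neg_ne_zero.2 hz) δ h, he.neg_zpow]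

lemma wt_neg_of_odd (q t z : ℝ) (hq : 0 < q) (hz : z ≠ 0) (δ : ℤ →₀ Fin 3) {W : Finset ℤ}
    (h : δ.support ⊆ W) (he : Odd (∑ s ∈ W, ((occ δ s : ℤ) - vac s))) :
    wt q t (-z) δ = - wt q t z δ := by
  rw [wt_formula q t z hq hz δ h, wt_formula q t (-z) hq (neg_ne_zero.2 hz) δ h, he.neg_zpow]
  ring

/-! ### Expansion of the infinite products -/

/-- The finite set of configurations whose excitations lie in `win K`. -/
noncomputable def configs (K : ℕ) : Finset (ℤ →₀ Fin 3) :=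
  (win K).finsupp fun _ => Finset.univ

lemma mem_configs {K : ℕ} {δ : ℤ →₀ Fin 3} : δ ∈ configs K ↔ δ.support ⊆ win K := by
  simp [configs, Finset.mem_finsupp_iff]

lemma win_mono : Monotone win := fun a b h s hs => by
  simp only [win, Finset.mem_Ioc] at *; omega

lemma configs_mono : Monotone configs := fun _ _ h _ hδ =>
  mem_configs.2 ((mem_configs.1 hδ).trans (win_mono h))

/-- Distributivity: the weights of the configurations excited only in `win K` sum to a finite
product. -/
lemma sum_configs (q t z : ℝ) (K : ℕ) :
    ∑ δ ∈ configs K, wt q t z δ = ∏ s ∈ win K, ∑ d : Fin 3, siteWt q t z s d := by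
  classical
  rw [Finset.prod_sum]
  unfold configs Finset.finsupp
  rw [Finset.sum_map]
  refine Finset.sum_congr (by congr!) fun p _ => ?_
  rw [Function.Embedding.coeFn_mk, wt_eq_prod q t z _ (W := win K) (Finsupp.support_indicator_subset _ _),
    ← Finset.prod_attach]
  refine Finset.prod_congr rfl fun s _ => ?_
  simp

lemma prod_win (g : ℤ → ℝ) (K : ℕ) :
    ∏ s ∈ win K, g s = ∏ i ∈ Finset.range K, g (i + 1) * g (-i) := by
  induction K with
  | zero => simp [win]
  | succ K ih =>
    have : win (K + 1) = insert ((K : ℤ) + 1) (insert (-(K : ℤ)) (win K)) := by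
      ext s; simp only [win, Finset.mem_insert, Finset.mem_Ioc]; push_cast; omega
    rw [this, Finset.prod_insert, Finset.prod_insert, Finset.prod_range_succ, ih]
    · ring
    · simp [win]
    · simp only [win, Finset.mem_insert, Finset.mem_Ioc]; omega

/-- The `i`-th factor of the infinite product. -/
noncomputable def factor (q t z : ℝ) (i : ℕ) : ℝ :=
  (1 + t * z * q ^ (i + 1) + z ^ 2 * q ^ (2 * (i + 1))) *
    (1 + t * z⁻¹ * q ^ i + z⁻¹ ^ 2 * q ^ (2 * i))

lemma sum_configs_eq (q t z : ℝ) (K : ℕ) :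
    ∑ δ ∈ configs K, wt q t z δ = ∏ i ∈ Finset.range K, factor q t z i := by
  rw [sum_configs, prod_win]
  refine Finset.prod_congr rfl fun i _ => ?_
  have h1 : (1 : ℤ) ≤ (i : ℤ) + 1 := by omega
  have h2 : ¬ (1 : ℤ) ≤ -(i : ℤ) := by omega
  have h3 : q ^ ((i : ℤ) + 1) = q ^ (i + 1) := by exact_mod_cast zpow_natCast q (i + 1)
  simp [Fin.sum_univ_three, siteWt, fug, h1, h2, factor, h3]
  ring

lemma multipliable_quad (q a b : ℝ) (hq0 : 0 < q) (hq1 : q < 1) :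
    Multipliable fun i : ℕ => 1 + a * q ^ i + b * q ^ (2 * i) := by
  have h : Summable fun i : ℕ => a * q ^ i + b * q ^ (2 * i) := by
    refine ((summable_geometric_of_lt_one hq0.le hq1).mul_left a).add ?_
    simp_rw [pow_mul]
    exact (summable_geometric_of_lt_one (by positivity) (by nlinarith)).mul_left b
  simpa only [add_assoc] using multipliable_one_add_of_summable h.norm

lemma multipliable_factor (q t z : ℝ) (hq0 : 0 < q) (hq1 : q < 1) :
    Multipliable (factor q t z) := by
  refine Multipliable.mul ?_ (multipliable_quad q _ _ hq0 hq1)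
  convert multipliable_quad q (t * z * q) (z ^ 2 * q ^ 2) hq0 hq1 using 2 with i
  ring

lemma tendsto_configs (q t z : ℝ) (hq0 : 0 < q) (hq1 : q < 1) :
    Tendsto (fun K => ∑ δ ∈ configs K, wt q t z δ) atTop (𝓝 (∏' i, factor q t z i)) := by
  simp_rw [sum_configs_eq]
  exact (multipliable_factor q t z hq0 hq1).hasProd.tendsto_prod_nat

lemma tendsto_configs_atTop : Tendsto configs atTop atTop :=
  tendsto_atTop_finset_of_monotone configs_mono fun δ =>
    (exists_win δ).imp fun K hK => mem_configs.2 (hK K le_rfl)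

/-- For `z > 0` all weights are positive, so convergence along the exhaustion `configs K` gives
summability. -/
lemma summable_wt (q t z : ℝ) (hq0 : 0 < q) (hq1 : q < 1) (ht : 1 ≤ t) (hz : 0 < z) :
    Summable (wt q t z) := by
  obtain ⟨c, hc⟩ := (tendsto_configs q t z hq0 hq1).bddAbove_range
  refine summable_of_sum_le (c := c) (fun δ => (wt_pos q t z hq0 ht hz δ).le) fun u => ?_
  obtain ⟨K, hK⟩ := (tendsto_configs_atTop.eventually (eventually_ge_atTop u)).exists
  exact (Finset.sum_le_sum_of_subset_of_nonneg hK
    fun δ _ _ => (wt_pos q t z hq0 ht hz δ).le).trans (hc ⟨K, rfl⟩)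

lemma summable_wt_neg (q t z : ℝ) (hq0 : 0 < q) (hq1 : q < 1) (ht : 1 ≤ t) (hz : 0 < z) :
    Summable (wt q t (-z)) := by
  refine Summable.of_norm_bounded (summable_wt q t z hq0 hq1 ht hz) fun δ => ?_
  have hp := wt_pos q t z hq0 ht hz δ
  rcases Int.even_or_odd (∑ s ∈ δ.support, ((occ δ s : ℤ) - vac s)) with h | h
  · rw [wt_neg_of_even q t z hq0 hz.ne' δ subset_rfl h, Real.norm_of_nonneg hp.le]
  · rw [wt_neg_of_odd q t z hq0 hz.ne' δ subset_rfl h, norm_neg, Real.norm_of_nonneg hp.le]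

lemma tsum_wt (q t z : ℝ) (hq0 : 0 < q) (hq1 : q < 1) (h : Summable (wt q t z)) :
    ∑' δ, wt q t z δ = ∏' i, factor q t z i :=
  tendsto_nhds_unique (h.hasSum.comp tendsto_configs_atTop) (tendsto_configs q t z hq0 hq1)

/-! ### Particle positions -/

/-- `GapRel l ω δ` says that `δ` is the configuration of charge `2 * l` with gaps `ω`. Here `x n` is
the position of the `n`-th particle counted from the right, `J s` is the number of particles
strictly to the right of `s`, and the two are linked by a Galois connection. -/
def GapRel (l : ℤ) (ω : ℕ → ℕ) (δ : ℤ →₀ Fin 3) : Prop :=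
  ∃ (x : ℕ → ℤ) (J : ℤ → ℕ), (∀ n, x n = x (n + 1) + ω n) ∧
    (∃ N : ℕ, ∀ n ≥ N, x n = l - ((n / 2 : ℕ) : ℤ)) ∧
    (∀ s, J (s - 1) = J s + occ δ s) ∧ ∀ n s, J s ≤ n ↔ x n ≤ s

/-- Far to the left the configuration is full, so the count of particles is affine in `s`. -/
lemma J_eq_of_x_eventually {x : ℕ → ℤ} {J : ℤ → ℕ} {l : ℤ} {N : ℕ}
    (hx : ∀ n ≥ N, x n = l - ((n / 2 : ℕ) : ℤ)) (hG : ∀ n s, J s ≤ n ↔ x n ≤ s) (s : ℤ)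
    (hs : (N : ℤ) + 1 ≤ 2 * l - 2 * s) : (J s : ℤ) = 2 * l - 2 * s := by
  obtain ⟨m, hm⟩ : ∃ m : ℕ, (m : ℤ) = 2 * l - 2 * s := ⟨(2 * l - 2 * s).toNat, by omega⟩
  have h1 := (hG m s).2 (by rw [hx m (by omega)]; omega)
  have h2 := mt (hG (m - 1) s).1 (by rw [hx (m - 1) (by omega)]; omega)
  omega

/-- Every charge `2 * l` and every admissible sequence of gaps come from a configuration: `x` is
recovered from the gaps by summation, normalised at infinity, and the absence of two consecutive
zero gaps bounds the occupation numbers by two. -/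
lemma exists_config (l : ℤ) (ω : ℕ → ℕ) (hω : ω ∈ He) : ∃ δ, GapRel l ω δ := by
  obtain ⟨h00, N, hN⟩ := hω
  set x : ℕ → ℤ := fun n => l - ((N / 2 : ℕ) : ℤ) + ∑ m ∈ Finset.range N, (ω m : ℤ)
    - ∑ m ∈ Finset.range n, (ω m : ℤ) with hxdef
  have hx1 : ∀ n, x n = x (n + 1) + ω n := fun n => by
    simp only [hxdef, Finset.sum_range_succ]; ring
  have hx2 : ∀ n ≥ N, x n = l - ((n / 2 : ℕ) : ℤ) := by
    intro n hn
    induction n, hn using Nat.le_induction with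
    | base => simp [hxdef]
    | succ n hn ih =>
      have h1 := hx1 n
      have h2 := hN n hn
      split_ifs at h2 <;> omega
  have hanti : Antitone x := antitone_nat_of_succ_le fun n => by have := hx1 n; omega
  have hex : ∀ s, ∃ n, x n ≤ s := fun s => by
    refine ⟨N + 2 * (l - s).toNat, ?_⟩
    rw [hx2 _ (by omega)]; omega
  classical
  set J : ℤ → ℕ := fun s => Nat.find (hex s) with hJ
  have hG : ∀ n s, J s ≤ n ↔ x n ≤ s := fun n s =>
    ⟨fun h => (hanti h).trans (Nat.find_spec (hex s)), fun h => Nat.find_min' _ h⟩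
  have hJ1 : ∀ s, J s ≤ J (s - 1) := fun s => by
    have := (hG (J (s - 1)) (s - 1)).1 le_rfl
    exact (hG _ _).2 (by omega)
  have hJ2 : ∀ s, J (s - 1) ≤ J s + 2 := fun s => by
    have h1 := (hG (J s) s).1 le_rfl
    refine (hG _ _).2 ?_
    have h2 := hx1 (J s)
    have h3 := hx1 (J s + 1)
    have h4 := h00 (J s)
    simp only [add_assoc, Nat.reduceAdd] at h3
    omega
  let d : ℤ → Fin 3 := fun s =>
    if 1 ≤ s then ⟨J (s - 1) - J s, by have := hJ2 s; omega⟩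
    else ⟨2 - (J (s - 1) - J s), by omega⟩
  have hfin : ∀ s, d s ≠ 0 → s ∈ Finset.Icc (min 0 (l - N - 1)) (max 1 (x 0 + 1)) := by
    intro s hs
    contrapose! hs
    rw [Finset.mem_Icc, not_and_or] at hs
    rcases hs with hs | hs
    · have e1 := J_eq_of_x_eventually hx2 hG s (by omega)
      have e2 := J_eq_of_x_eventually hx2 hG (s - 1) (by omega)
      simp only [d, if_neg (show ¬ 1 ≤ s by omega)]
      ext; simp; omega
    · have e1 := (hG 0 s).2 (by omega)
      have e2 := (hG 0 (s - 1)).2 (by omega)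
      simp only [d, if_pos (show 1 ≤ s by omega)]
      ext; simp; omega
  refine ⟨Finsupp.onFinset _ d hfin, x, J, hx1, ⟨N, hx2⟩, fun s => ?_, hG⟩
  have := hJ1 s
  have := hJ2 s
  simp only [occ, Finsupp.onFinset_apply, d]
  split_ifs <;> simp <;> omega

lemma GapRel.config_unique {l : ℤ} {ω : ℕ → ℕ} {δ δ' : ℤ →₀ Fin 3} (h : GapRel l ω δ)
    (h' : GapRel l ω δ') : δ = δ' := by
  obtain ⟨x, J, hx, ⟨N, hN⟩, hJ, hG⟩ := h
  obtain ⟨x', J', hx', ⟨N', hN'⟩, hJ', hG'⟩ := h'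
  have hxx : ∀ n, x n = x' n := by
    have key : ∀ k n, n + k = N + N' → x n = x' n := by
      intro k
      induction k with
      | zero => intro n hn; rw [hN n (by omega), hN' n (by omega)]
      | succ k ih => intro n hn; rw [hx, hx', ih (n + 1) (by omega)]
    intro n
    rcases le_total n (N + N') with h | h
    · exact key (N + N' - n) n (by omega)
    · rw [hN n (by omega), hN' n (by omega)]
  have hJJ : ∀ s, J s = J' s := fun s => le_antisymm
    ((hG _ _).2 (hxx _ ▸ (hG' _ _).1 le_rfl)) ((hG' _ _).2 (hxx _ ▸ (hG _ _).1 le_rfl))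
  ext s
  have h1 := hJ s
  have h2 := hJ' s
  have := (δ s).isLt
  have := (δ' s).isLt
  rw [hJJ, hJJ s] at h1
  unfold occ at h1 h2
  split_ifs at h1 h2 <;> omega

lemma GapRel.gaps_unique {l l' : ℤ} {ω ω' : ℕ → ℕ} {δ : ℤ →₀ Fin 3} (h : GapRel l ω δ)
    (h' : GapRel l' ω' δ) : l = l' ∧ ω = ω' := by
  obtain ⟨x, J, hx, ⟨N, hN⟩, hJ, hG⟩ := h
  obtain ⟨x', J', hx', ⟨N', hN'⟩, hJ', hG'⟩ := h'
  have hJJ : ∀ s, J s = J' s := by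
    have h0 : ∀ s, max (x 0) (x' 0) ≤ s → J s = J' s := fun s hs => by
      have e1 := (hG 0 s).2 (by omega)
      have e2 := (hG' 0 s).2 (by omega)
      omega
    intro s
    rcases le_total (max (x 0) (x' 0)) s with hs | hs
    · exact h0 s hs
    · induction s, hs using Int.leInductionDown with
      | base => exact h0 _ le_rfl
      | pred s _ ih => rw [hJ, hJ', ih]
  have hxx : ∀ n, x n = x' n := fun n => le_antisymm
    ((hG _ _).1 (hJJ _ ▸ (hG' _ _).2 le_rfl)) ((hG' _ _).1 (hJJ _ ▸ (hG _ _).2 le_rfl))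
  constructor
  · have h1 := hN (N + N') (by omega)
    have h2 := hN' (N + N') (by omega)
    rw [hxx] at h1
    omega
  · ext n
    have h1 := hx n
    have h2 := hx' n
    rw [hxx, hxx (n + 1)] at h1
    omega

lemma sum_Ioc_pred {M : Type*} [AddCommMonoid M] (g : ℤ → M) {s b : ℤ} (h : s ≤ b) :
    ∑ i ∈ Finset.Ioc (s - 1) b, g i = g s + ∑ i ∈ Finset.Ioc s b, g i := by
  have : Finset.Ioc (s - 1) b = insert s (Finset.Ioc s b) := by
    ext i; simp only [Finset.mem_insert, Finset.mem_Ioc]; omega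
  rw [this, Finset.sum_insert (by simp)]

lemma sum_vac (K : ℕ) : ∑ s ∈ win K, vac s = 2 * K := by
  unfold win
  have h1 : ∀ s ∈ Finset.Ioc (-(K : ℤ)) K, vac s = if s ≤ 0 then 2 else 0 := by
    intro s _; unfold vac; split_ifs <;> omega
  rw [Finset.sum_congr rfl h1, ← Finset.sum_filter]
  have : (Finset.Ioc (-(K : ℤ)) K).filter (· ≤ 0) = Finset.Ioc (-(K : ℤ)) 0 := by
    ext; simp only [Finset.mem_filter, Finset.mem_Ioc]; omega
  rw [this]; simp; ring

lemma sum_mul_vac (K : ℕ) : ∑ s ∈ win K, s * vac s = -(K * (K - 1)) := by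
  induction K with
  | zero => simp [win]
  | succ K ih =>
    have : win (K + 1) = insert ((K : ℤ) + 1) (insert (-(K : ℤ)) (win K)) := by
      ext s; simp only [win, Finset.mem_insert, Finset.mem_Ioc]; push_cast; omega
    rw [this, Finset.sum_insert, Finset.sum_insert, ih]
    · have h1 : vac ((K : ℤ) + 1) = 0 := by unfold vac; rw [if_pos (by omega)]
      have h2 : vac (-(K : ℤ)) = 2 := by unfold vac; rw [if_neg (by omega)]
      rw [h1, h2]; push_cast; ring
    · simp [win]
    · simp only [win, Finset.mem_insert, Finset.mem_Ioc]; omega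

/-- Every configuration of even charge has admissible gaps: `J` is obtained by summing the
occupation numbers, and the `n`-th particle sits at the least `s` with `J s ≤ n`. -/
lemma exists_gaps (δ : ℤ →₀ Fin 3) {K : ℕ} (hK : δ.support ⊆ win K)
    (he : Even (∑ s ∈ win K, ((occ δ s : ℤ) - vac s))) : ∃ l, ∃ ω ∈ He, GapRel l ω δ := by
  obtain ⟨l, hl⟩ := he
  have hout : ∀ s, s ∉ win K → δ s = 0 := fun s hs =>
    Finsupp.notMem_support_iff.1 fun h => hs (hK h)
  set J : ℤ → ℕ := fun s => ∑ i ∈ Finset.Ioc s K, occ δ i with hJdef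
  have hJ0 : ∀ s, (K : ℤ) ≤ s → J s = 0 := fun s hs => by simp [hJdef, Finset.Ioc_eq_empty_of_le hs]
  have hJ : ∀ s, J (s - 1) = J s + occ δ s := by
    intro s
    rcases le_or_gt s K with h | h
    · simp only [hJdef, sum_Ioc_pred _ h]; ring
    · rw [hJ0 s h.le, hJ0 (s - 1) (by omega)]
      have := hout s (by simp only [win, Finset.mem_Ioc]; omega)
      unfold occ; rw [this]; simp; omega
  have hJK : (J (-K) : ℤ) = 2 * l + 2 * K := by
    rw [Finset.sum_sub_distrib, sum_vac] at hl
    simp only [hJdef]; push_cast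
    unfold win at hl
    linarith
  have hJneg : ∀ s : ℤ, s ≤ -K → (J s : ℤ) = 2 * l - 2 * s := by
    intro s hs
    induction s, hs using Int.leInductionDown with
    | base => rw [hJK]; ring
    | pred s hs ih =>
      have := hout s (by simp only [win, Finset.mem_Ioc]; omega)
      rw [hJ]; push_cast; rw [ih]
      unfold occ; rw [this, if_neg (by omega)]; simp; ring
  have hanti : Antitone J := antitone_int_of_succ_le fun s => by
    have := hJ (s + 1); simp only [add_sub_cancel_right] at this; omega
  have hmin : ∀ n : ℕ, ∃ s, J s ≤ n ∧ ∀ s', J s' ≤ n → s ≤ s' := fun n => by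
    refine Int.exists_least_of_bdd ⟨min (-K) (l - n), fun s hs => ?_⟩ ⟨K, by simp [hJ0]⟩
    by_contra hlt
    have := hJneg s (by omega)
    omega
  choose x hx1 hx2 using hmin
  have hG : ∀ n s, J s ≤ n ↔ x n ≤ s := fun n s =>
    ⟨hx2 n s, fun h => (hanti h).trans (hx1 n)⟩
  have hxs : ∀ n, x (n + 1) ≤ x n := fun n => (hG _ _).1 ((hx1 n).trans (by omega))
  have hxss : ∀ n, x (n + 2) < x n := fun n => by
    have h1 := hx1 n
    have h2 := hJ (x n)
    have h3 := occ_le δ (x n)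
    have := (hG (n + 2) (x n - 1)).1 (by omega)
    omega
  set ω : ℕ → ℕ := fun n => (x n - x (n + 1)).toNat with hω
  have hxω : ∀ n, x n = x (n + 1) + ω n := fun n => by
    have := hxs n; simp only [hω]; omega
  have hxev : ∀ n ≥ 2 * (l.natAbs + K + 1), x n = l - ((n / 2 : ℕ) : ℤ) := fun n hn => by
    have h1 := hJneg (l - ((n / 2 : ℕ) : ℤ)) (by omega)
    have h2 := hJneg (l - ((n / 2 : ℕ) : ℤ) - 1) (by omega)
    have h3 := (hG n (l - ((n / 2 : ℕ) : ℤ))).1 (by omega)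
    have h4 := mt (hG n (l - ((n / 2 : ℕ) : ℤ) - 1)).2 (by omega)
    omega
  refine ⟨l, ω, ⟨fun n => ?_, 2 * (l.natAbs + K + 1), fun n hn => ?_⟩,
    x, J, hxω, ⟨_, hxev⟩, hJ, hG⟩
  · rintro ⟨h1, h2⟩
    have h3 := hxss n
    have h4 := hxω n
    have h5 := hxω (n + 1)
    simp only [add_assoc, Nat.reduceAdd] at h5
    omega
  · have h3 := hxω n
    rw [hxev n hn, hxev (n + 1) (by omega)] at h3
    split_ifs <;> omega

/-! ### The weight in terms of the gaps -/

/-- A sum over particles can be organised site by site: the particles at `s` are those with index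
in `[J s, J (s - 1))`. -/
lemma sum_range_J (J : ℤ → ℕ) (hJ : ∀ s, J s ≤ J (s - 1)) {b : ℤ} (hb : J b = 0) (g : ℕ → ℤ)
    (a : ℤ) (ha : a ≤ b) : ∑ n ∈ Finset.range (J a), g n =
      ∑ s ∈ Finset.Ioc a b, ∑ n ∈ Finset.Ico (J s) (J (s - 1)), g n := by
  induction a, ha using Int.leInductionDown with
  | base => simp [hb]
  | pred a ha ih =>
    rw [sum_Ioc_pred _ ha, ← ih, Finset.range_eq_Ico, Finset.range_eq_Ico, add_comm,
      Finset.sum_Ico_consecutive _ (Nat.zero_le _) (hJ a)]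

/-- Summation by parts for the partial sums of `Afun ω`. -/
lemma energy_aux (x : ℕ → ℤ) (ω : ℕ → ℕ) (hx : ∀ n, x n = x (n + 1) + ω n) (m : ℕ) :
    ∑ n ∈ Finset.range (2 * m), (if (n + 1) % 2 = 1 then ((n : ℤ) + 1) * (ω n : ℤ)
      else ((n : ℤ) + 1) * ((ω n : ℤ) - 1)) =
    ∑ n ∈ Finset.range (2 * m), x n - 2 * m * x (2 * m) - m * (m + 1) := by
  induction m with
  | zero => simp
  | succ m ih =>
    rw [show 2 * (m + 1) = 2 * m + 1 + 1 by ring]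
    rw [Finset.sum_range_succ, Finset.sum_range_succ, ih, Finset.sum_range_succ,
      Finset.sum_range_succ, if_pos (by omega), if_neg (by omega), hx (2 * m), hx (2 * m + 1)]
    push_cast
    ring

lemma B_aux (ω : ℕ → ℕ) (m : ℕ) :
    2 * (∑ n ∈ Finset.range (2 * m), (if (n + 1) % 2 = 1 ∧ 1 ≤ ω n then (1 : ℤ) else 0)
      - ∑ n ∈ Finset.range (2 * m), (if (n + 1) % 2 = 0 ∧ ω n = 0 then (1 : ℤ) else 0)) =
    2 * m - 2 * ∑ n ∈ Finset.range (2 * m), (if ω n = 0 then (1 : ℤ) else 0) := by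
  induction m with
  | zero => simp
  | succ m ih =>
    rw [show 2 * (m + 1) = 2 * m + 1 + 1 by ring]
    simp only [Finset.sum_range_succ]
    have e1 : (2 * m + 1) % 2 = 1 := by omega
    have e2 : (2 * m + 1 + 1) % 2 = 0 := by omega
    simp only [e1, e2]
    have h : ∀ k : ℕ, (if 1 ≤ k then (1 : ℤ) else 0) = 1 - if k = 0 then 1 else 0 := by
      intro k; split_ifs <;> omega
    simp only [true_and, false_and, if_false, zero_ne_one, one_ne_zero, h]
    push_cast
    linarith

/-- Charge, energy and number of singly occupied sites of a configuration, in terms of its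
gaps. -/
lemma GapRel.stats {l : ℤ} {ω : ℕ → ℕ} {δ : ℤ →₀ Fin 3} (h : GapRel l ω δ) (hω : ω ∈ He) :
    ∃ W : Finset ℤ, δ.support ⊆ W ∧ ∑ s ∈ W, ((occ δ s : ℤ) - vac s) = 2 * l ∧
      ∑ s ∈ W, s * ((occ δ s : ℤ) - vac s) = l * (l + 1) + Afun ω ∧
      ((∑ s ∈ W, if occ δ s = 1 then 1 else 0 : ℕ) : ℤ) = Bfun ω := by
  obtain ⟨x, J, hx, ⟨N, hN⟩, hJ, hG⟩ := h
  obtain ⟨-, N', hN'⟩ := hω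
  obtain ⟨K₀, hK₀⟩ := exists_win δ
  obtain ⟨K, hKdef⟩ : ∃ K : ℕ, K = K₀ + N + N' + l.natAbs + (x 0).natAbs + 1 := ⟨_, rfl⟩
  obtain ⟨m, hm⟩ : ∃ m : ℕ, (m : ℤ) = l + K := ⟨(l + K).toNat, by omega⟩
  have hJK : J K = 0 := Nat.le_zero.1 ((hG 0 K).2 (by omega))
  have hJm : J (-K) = 2 * m := by
    have := J_eq_of_x_eventually hN hG (-K) (by omega)
    omega
  have hmono : ∀ s, J s ≤ J (s - 1) := fun s => by rw [hJ]; omega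
  have hxm : x (2 * m) = -K := by rw [hN _ (by omega)]; omega
  have hsum := fun g : ℕ → ℤ => sum_range_J J hmono hJK g (-K) (by omega)
  rw [hJm] at hsum
  have hxs : ∀ s, ∀ n ∈ Finset.Ico (J s) (J (s - 1)), x n = s := by
    intro s n hn
    rw [Finset.mem_Ico] at hn
    have h1 := (hG n s).1 hn.1
    have h2 := mt (hG n (s - 1)).2 (by omega)
    omega
  have hcount : ∑ s ∈ win K, (occ δ s : ℤ) = 2 * m := by
    have := hsum fun _ => 1
    simp only [Finset.sum_const, Nat.card_Ico, Finset.card_range, hJ] at this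
    simp at this
    exact this.symm
  have hpos : ∑ s ∈ win K, s * (occ δ s : ℤ) = ∑ n ∈ Finset.range (2 * m), x n := by
    rw [hsum x]
    refine Finset.sum_congr rfl fun s _ => ?_
    rw [Finset.sum_congr rfl (hxs s), Finset.sum_const, Nat.card_Ico, hJ]
    simp [mul_comm]
  -- A doubly occupied site corresponds to exactly one vanishing gap.
  have hdouble : ∑ s ∈ win K, (if occ δ s = 2 then (1 : ℤ) else 0) =
      ∑ n ∈ Finset.range (2 * m), (if ω n = 0 then (1 : ℤ) else 0) := by
    rw [hsum]
    refine Finset.sum_congr rfl fun s _ => ?_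
    have hle := occ_le δ s
    have hlast : ∀ n, n + 1 = J (s - 1) → J s ≤ n → ω n ≠ 0 := fun n h1 h2 h0 => by
      have a1 := hxs s n (Finset.mem_Ico.2 ⟨h2, by omega⟩)
      have a2 := (hG (n + 1) (s - 1)).1 h1.ge
      have a3 := hx n
      omega
    have hJs := hJ s
    rcases (show occ δ s = 0 ∨ occ δ s = 1 ∨ occ δ s = 2 by omega) with h | h | h
    · simp [hJs, h]
    · have := hlast (J s) (by omega) le_rfl
      rw [hJs, h, Nat.Ico_succ_singleton, Finset.sum_singleton, if_neg this, if_neg (by omega)]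
    · have b1 := hlast (J s + 1) (by omega) (by omega)
      have b2 : ω (J s) = 0 := by
        have a1 := hxs s (J s) (Finset.mem_Ico.2 ⟨le_rfl, by omega⟩)
        have a2 := hxs s (J s + 1) (Finset.mem_Ico.2 ⟨by omega, by omega⟩)
        have a3 := hx (J s)
        omega
      rw [hJs, h, Finset.sum_Ico_succ_top (by omega), Finset.sum_Ico_succ_top (by omega)]
      simp [b1, b2]
  refine ⟨win K, hK₀ K (by omega), ?_, ?_, ?_⟩
  · rw [Finset.sum_sub_distrib, hcount, sum_vac]; linarith
  · simp_rw [mul_sub]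
    rw [Finset.sum_sub_distrib, hpos, sum_mul_vac]
    have hA : Afun ω = _ := finsum_eq_sum_of_support_subset _ (s := Finset.range (2 * m)) (by
      intro n hn
      rw [Function.mem_support] at hn
      contrapose! hn
      have h1 := hN' n (by simp at hn; omega)
      split_ifs at h1 ⊢ with h2 h3 <;> first | omega | simp [h1])
    rw [hA, energy_aux x ω hx, hxm, hm]
    ring
  · have hB1 := finsum_eq_sum_of_support_subset
      (fun n : ℕ => if (n + 1) % 2 = 1 ∧ 1 ≤ ω n then (1 : ℤ) else 0)
      (s := Finset.range (2 * m)) (by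
        intro n hn
        rw [Function.mem_support] at hn
        contrapose! hn
        have h1 := hN' n (by simp at hn; omega)
        split_ifs at h1 ⊢ <;> omega)
    have hB2 := finsum_eq_sum_of_support_subset
      (fun n : ℕ => if (n + 1) % 2 = 0 ∧ ω n = 0 then (1 : ℤ) else 0)
      (s := Finset.range (2 * m)) (by
        intro n hn
        rw [Function.mem_support] at hn
        contrapose! hn
        have h1 := hN' n (by simp at hn; omega)
        split_ifs at h1 ⊢ <;> omega)
    rw [Bfun, hB1, hB2, B_aux, ← hdouble, ← hcount, Finset.mul_sum, ← Finset.sum_sub_distrib]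
    push_cast
    refine Finset.sum_congr rfl fun s _ => ?_
    have := occ_le δ s
    split_ifs <;> omega

lemma GapRel.wt_eq {l : ℤ} {ω : ℕ → ℕ} {δ : ℤ →₀ Fin 3} (h : GapRel l ω δ) (hω : ω ∈ He)
    (q t z : ℝ) (hq : 0 < q) (hz : z ≠ 0) :
    wt q t z δ = (q ^ (l * (l + 1)) * z ^ (2 * l)) * (q ^ Afun ω * t ^ Bfun ω) := by
  obtain ⟨W, hW, h1, h2, h3⟩ := h.stats hω
  rw [wt_formula q t z hq hz δ hW, h1, h2, ← h3, zpow_natCast, zpow_add₀ hq.ne']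
  ring

lemma summable_left_of_prod {α β : Type*} (f : α → ℝ) (g : β → ℝ)
    (h : Summable fun p : α × β => f p.1 * g p.2) (b : β) (hb : g b ≠ 0) : Summable f :=
  (summable_mul_right_iff hb).1 (h.comp_injective (Prod.mk_left_injective b))

lemma summable_right_of_prod {α β : Type*} (f : α → ℝ) (g : β → ℝ)
    (h : Summable fun p : α × β => f p.1 * g p.2) (a : α) (ha : f a ≠ 0) : Summable g :=
  (summable_mul_left_iff ha).1 (h.comp_injective (Prod.mk_right_injective a))

theorem statement0 (q t z : ℝ) (hq0 : 0 < q) (hq1 : q < 1) (ht : 1 ≤ t) (hz : 0 < z) :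
    Summable (fun ℓ : ℤ => q ^ (ℓ * (ℓ + 1)) * z ^ (2 * ℓ)) ∧
    Multipliable (fun i : ℕ =>
      (1 + t * z * q ^ (i + 1) + z ^ 2 * q ^ (2 * (i + 1))) *
      (1 + t * z⁻¹ * q ^ i + z⁻¹ ^ 2 * q ^ (2 * i))) ∧
    Multipliable (fun i : ℕ =>
      (1 - t * z * q ^ (i + 1) + z ^ 2 * q ^ (2 * (i + 1))) *
      (1 - t * z⁻¹ * q ^ i + z⁻¹ ^ 2 * q ^ (2 * i))) ∧
    2 * Seven q t * (∑' ℓ : ℤ, q ^ (ℓ * (ℓ + 1)) * z ^ (2 * ℓ)) =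
      (∏' i : ℕ, (1 + t * z * q ^ (i + 1) + z ^ 2 * q ^ (2 * (i + 1))) *
        (1 + t * z⁻¹ * q ^ i + z⁻¹ ^ 2 * q ^ (2 * i))) +
      (∏' i : ℕ, (1 - t * z * q ^ (i + 1) + z ^ 2 * q ^ (2 * (i + 1))) *
        (1 - t * z⁻¹ * q ^ i + z⁻¹ ^ 2 * q ^ (2 * i))) := by
  have hneg : (fun i : ℕ => (1 - t * z * q ^ (i + 1) + z ^ 2 * q ^ (2 * (i + 1))) *
      (1 - t * z⁻¹ * q ^ i + z⁻¹ ^ 2 * q ^ (2 * i))) = factor q t (-z) := by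
    funext i; simp only [factor, inv_neg]; ring
  have hpos : (fun i : ℕ => (1 + t * z * q ^ (i + 1) + z ^ 2 * q ^ (2 * (i + 1))) *
      (1 + t * z⁻¹ * q ^ i + z⁻¹ ^ 2 * q ^ (2 * i))) = factor q t z := rfl
  rw [hneg, hpos]
  have hs := summable_wt q t z hq0 hq1 ht hz
  have hs' := summable_wt_neg q t z hq0 hq1 ht hz
  choose Φ hΦ using fun p : ℤ × He => exists_config p.1 p.2.1 p.2.2
  have hinj : Function.Injective Φ := fun p p' hpp => by
    obtain ⟨h1, h2⟩ := (hΦ p).gaps_unique (hpp ▸ hΦ p')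
    exact Prod.ext h1 (Subtype.ext h2)
  have hwt : ∀ p, wt q t z (Φ p) = (q ^ (p.1 * (p.1 + 1)) * z ^ (2 * p.1)) *
      (q ^ Afun p.2.1 * t ^ Bfun p.2.1) := fun p => (hΦ p).wt_eq p.2.2 q t z hq0 hz.ne'
  have hwt' : ∀ p, wt q t (-z) (Φ p) = wt q t z (Φ p) := fun p => by
    obtain ⟨W, hW, h1, -⟩ := (hΦ p).stats p.2.2
    exact wt_neg_of_even q t z hq0 hz.ne' _ hW (h1 ▸ even_two_mul _)
  -- Configurations of odd charge cancel between `z` and `-z`.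
  have hsupp : Function.support (fun δ => wt q t z δ + wt q t (-z) δ) ⊆ Set.range Φ := by
    intro δ hδ
    obtain ⟨K, hK⟩ := exists_win δ
    have hK := hK K le_rfl
    rcases Int.even_or_odd (∑ s ∈ win K, ((occ δ s : ℤ) - vac s)) with h | h
    · obtain ⟨l, ω, hω, hrel⟩ := exists_gaps δ hK h
      exact ⟨(l, ⟨ω, hω⟩), (hΦ (l, ⟨ω, hω⟩)).config_unique hrel⟩
    · exact absurd (by simp only [wt_neg_of_odd q t z hq0 hz.ne' δ hK h]; ring) hδ
  have hsp : Summable fun p : ℤ × He => (q ^ (p.1 * (p.1 + 1)) * z ^ (2 * p.1)) *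
      (q ^ Afun p.2.1 * t ^ Bfun p.2.1) := by
    simpa only [Function.comp_def, hwt] using hs.comp_injective hinj
  have ht0 : 0 < t := by linarith
  -- Each factor is summable because the other one takes a non-zero value at some point.
  have hsl : Summable fun l : ℤ => q ^ (l * (l + 1)) * z ^ (2 * l) := by
    have hmem : (fun n : ℕ => if (n + 1) % 2 = 0 then 1 else 0) ∈ He :=
      ⟨fun n => by dsimp only; split_ifs <;> simp <;> omega, 0, fun n _ => rfl⟩
    obtain ⟨ω₀⟩ : Nonempty He := ⟨⟨_, hmem⟩⟩
    have hne : q ^ Afun ω₀.1 * t ^ Bfun ω₀.1 ≠ 0 :=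
      mul_ne_zero (zpow_ne_zero _ hq0.ne') (zpow_ne_zero _ ht0.ne')
    exact summable_left_of_prod _ (fun ω : He => q ^ Afun ω.1 * t ^ Bfun ω.1) hsp ω₀ hne
  have hsω : Summable fun ω : He => q ^ Afun ω.1 * t ^ Bfun ω.1 := by
    exact summable_right_of_prod (fun l : ℤ => q ^ (l * (l + 1)) * z ^ (2 * l)) _ hsp 0 (by simp)
  refine ⟨hsl, multipliable_factor q t z hq0 hq1, multipliable_factor q t (-z) hq0 hq1, ?_⟩
  rw [← tsum_wt q t z hq0 hq1 hs, ← tsum_wt q t (-z) hq0 hq1 hs', ← hs.tsum_add hs',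
    ← hinj.tsum_eq hsupp]
  simp only [hwt', hwt, ← two_mul]
  rw [tsum_mul_left, ← hsl.tsum_mul_tsum hsω hsp, Seven]
  ring
end

section
/- For all real numbers q̃, t, z with 0 < q̃ < 1, t ≥ 1 and z > 0, one has 2·t·S_odd(q̃,t)·Σ_{ℓ∈ℤ} q̃^{(ℓ+1)²} z^{2ℓ+1} = Π_{i≥1} (1 + t·z·q̃^i + z²·q̃^{2i})·(1 + t·z⁻¹·q̃^{i−1} + z⁻²·q̃^{2(i−1)}) − Π_{i≥1} (1 − t·z·q̃^i + z²·q̃^{2i})·(1 − t·z⁻¹·q̃^{i−1} + z⁻²·q̃^{2(i−1)}), where the sum over ℓ and the infinite products converge absolutely. -/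
/-!
Write `P(x) = 1 + t x + x²`. The right-hand side is `F(z) - F(-z)`, where
`F(z) = ∏_{i ≥ 0} P(q^i (q z)) P(q^i z⁻¹)`; it is twice the odd part of a two-sided infinite product.

*One-sided product.* Let `g_n` (`coeff`) be given by `g_0 = 1`, `g_{-1} = 0` and
`(1 - q^n) g_n = t q^(n-1) g_{n-1} + q^(n-2) g_{n-2}`. Then `G(x) = ∑ g_n x^n` converges for all `x`
and satisfies `G(x) = P(x) G(q x)`, so that `G(x) = ∏_{i ≥ 0} P(q^i x)` (`tprod_quad`).

*Odd part.* Cutting the factors `P(q^i z⁻¹)` off at `i < N` gives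
`z^(-2N) q^(N(N-1)) G(q^(1-N) z)` (`truncProd_eq`), whose odd part is
`∑_l c_{l+N} q^((l+1)²) z^(2l+1)` with `c_K = g_{2K+1} / q^(K²)` (`normCoeff`). The `c_K` are bounded
and converge to some `L`, and dominated convergence as `N → ∞` yields
`F(z) - F(-z) = 2 L ∑_l q^((l+1)²) z^(2l+1)` (`theta_identity`).

*Combinatorial meaning of the limit.* The recursion for `(1 - q^n) g_n` is also the transfer-matrix
recursion for words of length `n - 1` without two consecutive zeros, obtained by splitting off the
last letter (`hasSum_wordWt`): such a word is the sequence of gaps between `n` particles placed with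
at most two per site. Sequences in `Ho` which agree with the ground state from index `2K` on are
exactly such words of length `2K`, so their weights add up to `(1 - q^(2K+1)) c_K / t`
(`hasSum_level`). Letting `K → ∞` gives `Sodd = L / t` (`Sodd_eq`).
-/


open scoped BigOperators

namespace OddTheta

open Filter Topology

/-! ### The one-sided product as a power series -/

/-- The coefficients of the power series expansion of `∏_{i ≥ 0} (1 + t q^i x + q^(2i) x²)`,
defined by the recursion that comes from comparing the product at `x` and at `q x`. -/
noncomputable def coeff (q t : ℝ) : ℕ → ℝ
  | 0 => 1
  | 1 => t / (1 - q)
  | n + 2 => (t * q ^ (n + 1) * coeff q t (n + 1) + q ^ n * coeff q t n) / (1 - q ^ (n + 2))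

/-- The quadratic factor `1 + t x + x²`. -/
noncomputable def quad (t x : ℝ) : ℝ := 1 + t * x + x ^ 2

/-- The power series with coefficients `coeff`. -/
noncomputable def gen (q t x : ℝ) : ℝ := ∑' n : ℕ, coeff q t n * x ^ n

section
variable {q t : ℝ}

lemma hasSum_of_eq {α : Type*} {f g : α → ℝ} {a b : ℝ} (h : HasSum f a) (hfg : ∀ x, g x = f x)
    (hab : b = a) : HasSum g b := by
  rwa [hab, funext hfg]

lemma one_sub_pow_pos (hq0 : 0 < q) (hq1 : q < 1) (n : ℕ) : 0 < 1 - q ^ (n + 1) :=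
  sub_pos.2 (pow_lt_one₀ hq0.le hq1 n.succ_ne_zero)

lemma coeff_one (hq1 : q < 1) : (1 - q) * coeff q t 1 = t := by
  have : 1 - q ≠ 0 := by linarith
  rw [coeff]; field_simp

lemma coeff_rec (hq0 : 0 < q) (hq1 : q < 1) (n : ℕ) :
    (1 - q ^ (n + 2)) * coeff q t (n + 2) =
      t * q ^ (n + 1) * coeff q t (n + 1) + q ^ n * coeff q t n := by
  have := (one_sub_pow_pos hq0 hq1 (n + 1)).ne'
  rw [coeff]; field_simp

lemma coeff_nonneg (hq0 : 0 < q) (hq1 : q < 1) (ht : 1 ≤ t) : ∀ n, 0 ≤ coeff q t n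
  | 0 => by simp [coeff]
  | 1 => by
    rw [coeff]; exact div_nonneg (by linarith) (by linarith)
  | n + 2 => by
    rw [coeff]
    have h1 := coeff_nonneg hq0 hq1 ht (n + 1)
    have h2 := coeff_nonneg hq0 hq1 ht n
    have h3 := one_sub_pow_pos hq0 hq1 (n + 1)
    have : 0 ≤ t := by linarith
    exact div_nonneg (by positivity) h3.le

/-- Finite form of the functional equation `G(x) = (1 + t x + x²) G(q x)`. It gives both the
convergence of the series and, in the limit, the functional equation itself. -/
lemma partial_eq (hq0 : 0 < q) (hq1 : q < 1) (x : ℝ) (N : ℕ) :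
    ∑ n ∈ Finset.range (N + 2), coeff q t n * x ^ n =
      ∑ n ∈ Finset.range (N + 2), coeff q t n * (q * x) ^ n +
      t * x * ∑ n ∈ Finset.range (N + 1), coeff q t n * (q * x) ^ n +
      x ^ 2 * ∑ n ∈ Finset.range N, coeff q t n * (q * x) ^ n := by
  induction N with
  | zero =>
    simp only [Finset.sum_range_succ, Finset.sum_range_zero, pow_zero, pow_one]
    have h := coeff_one (t := t) hq1
    have h0 : coeff q t 0 = 1 := by rw [coeff]
    rw [h0]
    linear_combination x * h
  | succ N ih =>
    rw [Finset.sum_range_succ _ (N + 2), ih, Finset.sum_range_succ _ (N + 2),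
      Finset.sum_range_succ _ (N + 1), Finset.sum_range_succ _ N]
    have h := coeff_rec (t := t) hq0 hq1 N
    linear_combination x ^ (N + 2) * h

lemma summable_quad (hq0 : 0 < q) (hq1 : q < 1) (x : ℝ) :
    Summable fun i : ℕ => t * (q ^ i * x) + (q ^ i * x) ^ 2 := by
  have h1 := summable_geometric_of_lt_one hq0.le hq1
  have h2 := summable_geometric_of_lt_one (sq_nonneg q) (by nlinarith : q ^ 2 < 1)
  refine ((h1.mul_left (t * x)).add (h2.mul_left (x ^ 2))).congr fun i => ?_
  ring

lemma multipliable_quad (hq0 : 0 < q) (hq1 : q < 1) (x : ℝ) :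
    Multipliable fun i : ℕ => quad t (q ^ i * x) := by
  refine (multipliable_one_add_of_summable (summable_quad (t := t) hq0 hq1 x).norm).congr
    fun i => ?_
  rw [quad]; ring

lemma quad_nonneg (ht : 1 ≤ t) {x : ℝ} (hx : 0 ≤ x) : 0 ≤ quad t x := by
  have : 0 ≤ t := by linarith
  rw [quad]; positivity

lemma tendsto_pow_mul_zero (hq0 : 0 < q) (hq1 : q < 1) (x : ℝ) :
    Tendsto (fun M : ℕ => q ^ M * x) atTop (𝓝 0) := by
  simpa using (tendsto_pow_atTop_nhds_zero_of_lt_one hq0.le hq1).mul_const x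

lemma partial_le_prod (hq0 : 0 < q) (hq1 : q < 1) (ht : 1 ≤ t) {x : ℝ} (hx : 0 ≤ x) (N M : ℕ) :
    ∑ n ∈ Finset.range (N + 2), coeff q t n * x ^ n ≤
      (∏ i ∈ Finset.range M, quad t (q ^ i * x)) *
        ∑ n ∈ Finset.range (N + 2), coeff q t n * (q ^ M * x) ^ n := by
  have ht0 : 0 ≤ t := by linarith
  have hc := coeff_nonneg hq0 hq1 ht
  induction M with
  | zero => simp
  | succ M ih =>
    refine ih.trans ?_
    rw [Finset.prod_range_succ, mul_assoc]
    refine mul_le_mul_of_nonneg_left ?_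
      (Finset.prod_nonneg fun i _ => quad_nonneg ht (by positivity))
    set y := q ^ M * x with hy
    have hy0 : 0 ≤ y := by positivity
    rw [partial_eq hq0 hq1 y N, show q ^ (M + 1) * x = q * y by rw [hy]; ring]
    have hmono : ∀ k, k ≤ N + 2 → ∑ n ∈ Finset.range k, coeff q t n * (q * y) ^ n ≤
        ∑ n ∈ Finset.range (N + 2), coeff q t n * (q * y) ^ n := fun k hk =>
      Finset.sum_le_sum_of_subset_of_nonneg (Finset.range_subset_range.2 hk)
        fun n _ _ => mul_nonneg (hc n) (by positivity)
    have h1 := mul_le_mul_of_nonneg_left (hmono (N + 1) (by lia)) (mul_nonneg ht0 hy0)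
    have h2 := mul_le_mul_of_nonneg_left (hmono N (by lia)) (sq_nonneg y)
    rw [quad]
    linarith

/-- The partial sums are bounded by the infinite product: let `M → ∞` in `partial_le_prod`. -/
lemma summable_coeff_of_nonneg (hq0 : 0 < q) (hq1 : q < 1) (ht : 1 ≤ t) {x : ℝ} (hx : 0 ≤ x) :
    Summable fun n : ℕ => coeff q t n * x ^ n := by
  have hc := coeff_nonneg hq0 hq1 ht
  refine summable_of_sum_range_le (c := ∏' i : ℕ, quad t (q ^ i * x))
    (fun n => mul_nonneg (hc n) (by positivity)) fun N => ?_
  refine (Finset.sum_le_sum_of_subset_of_nonneg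
    (Finset.range_subset_range.2 (Nat.le_add_right N 2))
    fun n _ _ => mul_nonneg (hc n) (by positivity)).trans ?_
  have hS : Tendsto (fun M : ℕ => ∑ n ∈ Finset.range (N + 2), coeff q t n * (q ^ M * x) ^ n)
      atTop (𝓝 1) := by
    have : Tendsto (fun y : ℝ => ∑ n ∈ Finset.range (N + 2), coeff q t n * y ^ n) (𝓝 0)
        (𝓝 (∑ n ∈ Finset.range (N + 2), coeff q t n * 0 ^ n)) :=
      Continuous.tendsto (by fun_prop) 0
    rw [show ∑ n ∈ Finset.range (N + 2), coeff q t n * (0 : ℝ) ^ n = 1 by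
      rw [Finset.sum_range_succ']; simp [coeff]] at this
    exact this.comp (tendsto_pow_mul_zero hq0 hq1 x)
  have hP := (multipliable_quad (t := t) hq0 hq1 x).hasProd.tendsto_prod_nat
  have := hP.mul hS
  rw [mul_one] at this
  exact ge_of_tendsto' this fun M => partial_le_prod hq0 hq1 ht hx N M

lemma summable_coeff (hq0 : 0 < q) (hq1 : q < 1) (ht : 1 ≤ t) (x : ℝ) :
    Summable fun n : ℕ => coeff q t n * x ^ n := by
  refine Summable.of_norm ((summable_coeff_of_nonneg hq0 hq1 ht (abs_nonneg x)).congr fun n => ?_)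
  rw [norm_mul, norm_pow, Real.norm_eq_abs, Real.norm_eq_abs,
    abs_of_nonneg (coeff_nonneg hq0 hq1 ht n)]

lemma gen_eq (hq0 : 0 < q) (hq1 : q < 1) (ht : 1 ≤ t) (x : ℝ) :
    gen q t x = quad t x * gen q t (q * x) := by
  have h1 := (summable_coeff hq0 hq1 ht x).hasSum.tendsto_sum_nat
  have h2 := (summable_coeff hq0 hq1 ht (q * x)).hasSum.tendsto_sum_nat
  have h3 := (((tendsto_add_atTop_iff_nat 2).2 h2).add
    (((tendsto_add_atTop_iff_nat 1).2 h2).const_mul (t * x))).add (h2.const_mul (x ^ 2))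
  have := tendsto_nhds_unique ((tendsto_add_atTop_iff_nat 2).2 h1)
    (h3.congr fun N => (partial_eq hq0 hq1 x N).symm)
  rw [gen, this, quad, gen]; ring

lemma gen_eq_prod (hq0 : 0 < q) (hq1 : q < 1) (ht : 1 ≤ t) (x : ℝ) (M : ℕ) :
    gen q t x = (∏ i ∈ Finset.range M, quad t (q ^ i * x)) * gen q t (q ^ M * x) := by
  induction M with
  | zero => simp
  | succ M ih =>
    rw [ih, gen_eq hq0 hq1 ht (q ^ M * x), Finset.prod_range_succ, mul_assoc]
    congr 3; ring

lemma tprod_quad (hq0 : 0 < q) (hq1 : q < 1) (ht : 1 ≤ t) (x : ℝ) :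
    ∏' i : ℕ, quad t (q ^ i * x) = gen q t x := by
  have hG : Tendsto (fun M : ℕ => gen q t (q ^ M * x)) atTop (𝓝 1) := by
    have h0 : (1 : ℝ) = ∑' n : ℕ, coeff q t n * 0 ^ n := by
      rw [tsum_eq_single 0 (by intro n hn; simp [hn])]; simp [coeff]
    rw [h0]
    refine tendsto_tsum_of_dominated_convergence
      (summable_coeff hq0 hq1 ht |x|) (fun n => ?_) (Eventually.of_forall fun M n => ?_)
    · exact ((tendsto_pow_mul_zero hq0 hq1 x).pow n).const_mul _
    · rw [norm_mul, norm_pow, Real.norm_eq_abs, Real.norm_eq_abs,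
        abs_of_nonneg (coeff_nonneg hq0 hq1 ht n), abs_mul, abs_of_pos (pow_pos hq0 M)]
      refine mul_le_mul_of_nonneg_left (pow_le_pow_left₀ (by positivity) ?_ n)
        (coeff_nonneg hq0 hq1 ht n)
      exact mul_le_of_le_one_left (abs_nonneg x) (pow_le_one₀ hq0.le hq1.le)
  have hP := ((multipliable_quad (t := t) hq0 hq1 x).hasProd.tendsto_prod_nat).mul hG
  rw [mul_one] at hP
  refine tendsto_nhds_unique hP ?_
  exact tendsto_const_nhds.congr fun M => gen_eq_prod hq0 hq1 ht x M

/-! ### The odd part of the two-sided product -/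

/-- The odd coefficient `coeff (2K+1)` divided by `q^(K²)`, where `K²` is the least energy of
`2K+1` particles on the sites `0, 1, 2, …` with at most two particles per site. -/
noncomputable def normCoeff (q t : ℝ) (K : ℕ) : ℝ := coeff q t (2 * K + 1) / q ^ (K ^ 2)

/-- The two-sided product with only the first `N` of the factors in `z⁻¹`. -/
noncomputable def truncProd (q t : ℝ) (N : ℕ) (z : ℝ) : ℝ :=
  (∏ i ∈ Finset.range N, quad t (q ^ i * z⁻¹)) * gen q t (q * z)

/-- Since `P(q^i z⁻¹) = z⁻² q^(2i) P(q^(-i) z)` for `P(x) = 1 + t x + x²`, the truncated two-sided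
product is a shifted one-sided one. -/
lemma truncProd_eq (hq0 : 0 < q) (hq1 : q < 1) (ht : 1 ≤ t) {z : ℝ} (hz : z ≠ 0) (N : ℕ) :
    truncProd q t N z = z ^ (-2 * N : ℤ) * q ^ (N * (N - 1) : ℤ) *
      gen q t (q ^ (1 - N : ℤ) * z) := by
  have hq : q ≠ 0 := hq0.ne'
  induction N with
  | zero => simp [truncProd]
  | succ N ih =>
    have hrec : truncProd q t (N + 1) z = quad t (q ^ N * z⁻¹) * truncProd q t N z := by
      rw [truncProd, truncProd, Finset.prod_range_succ]; ring
    have hg := gen_eq hq0 hq1 ht (q ^ (1 - (N + 1 : ℕ) : ℤ) * z)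
    have e1 : q * (q ^ (1 - (N + 1 : ℕ) : ℤ) * z) = q ^ (1 - N : ℤ) * z := by
      rw [← mul_assoc, ← zpow_one_add₀ hq]; congr 2; push_cast; ring
    rw [hrec, ih, hg, e1]
    have e2 : q ^ (1 - (N + 1 : ℕ) : ℤ) = (q ^ N)⁻¹ := by
      rw [← zpow_natCast, ← zpow_neg]; congr 1; push_cast; ring
    have e3 : z ^ (-2 * (N + 1 : ℕ) : ℤ) = z ^ (-2 * N : ℤ) * (z ^ 2)⁻¹ := by
      rw [← zpow_natCast z 2, ← zpow_neg, ← zpow_add₀ hz]; congr 1; push_cast; ring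
    have e4 : q ^ ((N + 1 : ℕ) * ((N + 1 : ℕ) - 1) : ℤ) = q ^ (N * (N - 1) : ℤ) * (q ^ N) ^ 2 := by
      rw [← pow_mul, ← zpow_natCast q (N * 2), ← zpow_add₀ hq]; congr 1; push_cast; ring
    have e5 : quad t (q ^ N * z⁻¹) = (z ^ 2)⁻¹ * (q ^ N) ^ 2 * quad t ((q ^ N)⁻¹ * z) := by
      have : q ^ N ≠ 0 := pow_ne_zero _ hq
      rw [quad, quad]; field_simp; ring
    rw [e2, e3, e4, e5]; ring

lemma exponent_identity (hq0 : 0 < q) {z : ℝ} (hz : z ≠ 0) (N K : ℕ) :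
    z ^ (-2 * N : ℤ) * q ^ (N * (N - 1) : ℤ) *
      (coeff q t (2 * K + 1) * (q ^ (1 - N : ℤ) * z) ^ (2 * K + 1)) =
    normCoeff q t K * (q ^ (((K : ℤ) - N + 1) ^ 2) * z ^ (2 * ((K : ℤ) - N) + 1)) := by
  have hq : q ≠ 0 := hq0.ne'
  have e1 : z ^ (2 * ((K : ℤ) - N) + 1) = z ^ (-2 * N : ℤ) * z ^ (2 * K + 1) := by
    rw [← zpow_natCast, ← zpow_add₀ hz]; congr 1; push_cast; ring
  have e2 : q ^ (N * (N - 1) : ℤ) * (q ^ (1 - N : ℤ)) ^ (2 * K + 1) =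
      (q ^ (K ^ 2))⁻¹ * q ^ (((K : ℤ) - N + 1) ^ 2) := by
    rw [← zpow_natCast, ← zpow_natCast, ← zpow_mul, ← zpow_neg, ← zpow_add₀ hq, ← zpow_add₀ hq]
    congr 1; push_cast; ring
  rw [mul_pow, e1, normCoeff, div_eq_mul_inv]
  linear_combination z ^ (-2 * N : ℤ) * coeff q t (2 * K + 1) * z ^ (2 * K + 1) * e2

lemma hasSum_gen_odd (hq0 : 0 < q) (hq1 : q < 1) (ht : 1 ≤ t) (x : ℝ) :
    HasSum (fun K : ℕ => 2 * (coeff q t (2 * K + 1) * x ^ (2 * K + 1)))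
      (gen q t x - gen q t (-x)) := by
  have h := (summable_coeff hq0 hq1 ht x).hasSum.sub (summable_coeff hq0 hq1 ht (-x)).hasSum
  have hinj : Function.Injective fun K : ℕ => 2 * K + 1 := fun a b hab => by
    simp only at hab; lia
  rw [← hinj.hasSum_iff] at h
  · refine hasSum_of_eq h (fun K => ?_) rfl
    have : Odd (2 * K + 1) := ⟨K, rfl⟩
    simp only [Function.comp, this.neg_pow]; ring
  · intro n hn
    have : Even n := by
      by_contra hodd
      obtain ⟨k, hk⟩ := Nat.not_even_iff_odd.1 hodd
      exact hn ⟨k, hk.symm⟩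
    rw [this.neg_pow, sub_self]

lemma hasSum_truncProd_odd (hq0 : 0 < q) (hq1 : q < 1) (ht : 1 ≤ t) {z : ℝ} (hz : z ≠ 0)
    (N : ℕ) :
    HasSum (fun K : ℕ => 2 * (normCoeff q t K *
        (q ^ (((K : ℤ) - N + 1) ^ 2) * z ^ (2 * ((K : ℤ) - N) + 1))))
      (truncProd q t N z - truncProd q t N (-z)) := by
  have h := (hasSum_gen_odd hq0 hq1 ht (q ^ (1 - N : ℤ) * z)).mul_left
    (z ^ (-2 * N : ℤ) * q ^ (N * (N - 1) : ℤ))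
  have hev : Even (-2 * N : ℤ) := ⟨-N, by ring⟩
  rw [truncProd_eq hq0 hq1 ht hz, truncProd_eq hq0 hq1 ht (neg_ne_zero.2 hz), hev.neg_zpow,
    mul_neg, ← mul_sub]
  refine hasSum_of_eq h (fun K => ?_) rfl
  rw [← exponent_identity hq0 hz]; ring

lemma tendsto_truncProd (hq0 : 0 < q) (hq1 : q < 1) (ht : 1 ≤ t) (z : ℝ) :
    Tendsto (fun N => truncProd q t N z) atTop
      (𝓝 (∏' i : ℕ, quad t (q ^ i * (q * z)) * quad t (q ^ i * z⁻¹))) := by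
  have h1 := multipliable_quad (t := t) hq0 hq1 (q * z)
  have h2 := multipliable_quad (t := t) hq0 hq1 z⁻¹
  rw [h1.tprod_mul h2, tprod_quad hq0 hq1 ht, mul_comm]
  exact h2.hasProd.tendsto_prod_nat.mul_const _

lemma normCoeff_nonneg (hq0 : 0 < q) (hq1 : q < 1) (ht : 1 ≤ t) (K : ℕ) :
    0 ≤ normCoeff q t K :=
  div_nonneg (coeff_nonneg hq0 hq1 ht _) (by positivity)

/-- `q * normCoeff q t K` is one term of a series of non-negative terms with sum
`truncProd q t K 1`, and the latter converges as `K → ∞`. -/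
lemma exists_normCoeff_le (hq0 : 0 < q) (hq1 : q < 1) (ht : 1 ≤ t) :
    ∃ C, ∀ K, normCoeff q t K ≤ C := by
  obtain ⟨C, hC⟩ := (tendsto_truncProd hq0 hq1 ht 1).bddAbove_range
  refine ⟨C / q, fun K => ?_⟩
  rw [le_div_iff₀ hq0]
  refine le_trans ?_ (hC ⟨K, rfl⟩)
  simp only
  rw [truncProd_eq hq0 hq1 ht one_ne_zero]
  have h := exponent_identity (t := t) hq0 one_ne_zero K K
  have hle : coeff q t (2 * K + 1) * (q ^ (1 - K : ℤ) * 1) ^ (2 * K + 1) ≤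
      gen q t (q ^ (1 - K : ℤ) * 1) :=
    (summable_coeff hq0 hq1 ht _).le_tsum (2 * K + 1)
      fun n _ => mul_nonneg (coeff_nonneg hq0 hq1 ht n) (by positivity)
  calc normCoeff q t K * q = _ := by rw [h]; simp
    _ ≤ _ := mul_le_mul_of_nonneg_left hle (by positivity)

/-- One half of the theta series, by the ratio test. -/
lemma summable_theta_aux (hq0 : 0 < q) (hq1 : q < 1) {z : ℝ} (hz : 0 < z) :
    Summable fun n : ℕ => q ^ (n ^ 2) * z ^ n := by
  refine summable_of_ratio_test_tendsto_lt_one (l := 0) one_pos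
    (Eventually.of_forall fun n => by positivity) ?_
  have : Tendsto (fun n : ℕ => (q ^ 2) ^ n * (q * z)) atTop (𝓝 0) := by
    simpa using (tendsto_pow_atTop_nhds_zero_of_lt_one (sq_nonneg q)
      (by nlinarith : q ^ 2 < 1)).mul_const (q * z)
  refine this.congr fun n => ?_
  rw [Real.norm_of_nonneg (by positivity), Real.norm_of_nonneg (by positivity), eq_div_iff
    (by positivity)]
  ring

lemma summable_theta (hq0 : 0 < q) (hq1 : q < 1) {z : ℝ} (hz : 0 < z) :
    Summable fun l : ℤ => q ^ ((l + 1) ^ 2) * z ^ (2 * l + 1) := by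
  have h : Summable fun l : ℤ => q ^ (l ^ 2) * z ^ (2 * l) := by
    refine Summable.of_nat_of_neg ((summable_theta_aux hq0 hq1 (pow_pos hz 2)).congr fun n => ?_)
      ((summable_theta_aux hq0 hq1 (pow_pos (inv_pos.2 hz) 2)).congr fun n => ?_)
    · rw [zpow_mul]; norm_cast
    · rw [neg_sq, mul_neg, zpow_neg, zpow_mul, ← inv_zpow, ← inv_zpow]; norm_cast
  refine (((Equiv.addRight (1 : ℤ)).summable_iff.2 h).mul_right z⁻¹).congr fun l => ?_
  simp only [Function.comp, Equiv.coe_addRight]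
  rw [mul_assoc, ← zpow_sub_one₀ hz.ne']
  congr 2; ring

/-- The odd part of the two-sided product is a multiple of a theta series, by dominated convergence
in `hasSum_truncProd_odd`. -/
lemma theta_identity (hq0 : 0 < q) (hq1 : q < 1) (ht : 1 ≤ t) {z : ℝ} (hz : 0 < z) {L : ℝ}
    (hL : Tendsto (normCoeff q t) atTop (𝓝 L)) :
    2 * L * ∑' l : ℤ, q ^ ((l + 1) ^ 2) * z ^ (2 * l + 1) =
      (∏' i : ℕ, quad t (q ^ i * (q * z)) * quad t (q ^ i * z⁻¹)) -
      ∏' i : ℕ, quad t (q ^ i * (q * -z)) * quad t (q ^ i * (-z)⁻¹) := by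
  set θ : ℤ → ℝ := fun l => q ^ ((l + 1) ^ 2) * z ^ (2 * l + 1) with hθ
  have hθ0 : ∀ l, 0 ≤ θ l := fun l => by simp only [hθ]; positivity
  obtain ⟨C, hC⟩ := exists_normCoeff_le hq0 hq1 ht
  -- the normalised coefficients, extended by zero to negative indices
  let c : ℤ → ℝ := fun k => if 0 ≤ k then normCoeff q t k.toNat else 0
  have hC0 : 0 ≤ C := (normCoeff_nonneg hq0 hq1 ht 0).trans (hC 0)
  have hc : ∀ k, |c k| ≤ C := fun k => by
    simp only [c]
    split_ifs
    · rw [abs_of_nonneg (normCoeff_nonneg hq0 hq1 ht _)]; exact hC _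
    · simpa using hC0
  have hsum : ∀ N : ℕ, ∑' l : ℤ, 2 * (c (l + N) * θ l) =
      truncProd q t N z - truncProd q t N (-z) := fun N => by
    rw [← (hasSum_truncProd_odd hq0 hq1 ht hz.ne' N).tsum_eq,
      ← (Equiv.subRight (N : ℤ)).tsum_eq, ← (Nat.cast_injective (R := ℤ)).tsum_eq]
    · refine tsum_congr fun K => ?_
      simp [c, hθ]
    · intro k hk
      have : 0 ≤ k := by
        by_contra hneg
        exact hk (by simp [c, hneg])
      exact ⟨k.toNat, by simp [this]⟩
  have hlim : Tendsto (fun N : ℕ => ∑' l : ℤ, 2 * (c (l + N) * θ l)) atTop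
      (𝓝 (∑' l : ℤ, 2 * (L * θ l))) := by
    refine tendsto_tsum_of_dominated_convergence
      (((summable_theta hq0 hq1 hz).mul_left C).mul_left 2) (fun l => ?_)
      (Eventually.of_forall fun N l => ?_)
    · refine Tendsto.const_mul _ (Tendsto.mul_const _ ?_)
      have h1 : Tendsto (fun N : ℕ => (l + N).toNat) atTop atTop :=
        tendsto_atTop.2 fun b => by
          filter_upwards [eventually_ge_atTop (b + l.natAbs)] with N hN
          lia
      refine (hL.comp h1).congr' ?_
      filter_upwards [eventually_ge_atTop l.natAbs] with N hN
      simp only [c, Function.comp]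
      rw [if_pos (by lia)]
    · rw [norm_mul, norm_mul, Real.norm_eq_abs, Real.norm_eq_abs, Real.norm_eq_abs,
        abs_of_nonneg (hθ0 l), abs_two]
      exact mul_le_mul_of_nonneg_left (mul_le_mul_of_nonneg_right (hc _) (hθ0 l)) two_pos.le
  rw [tsum_mul_left, tsum_mul_left, ← mul_assoc] at hlim
  exact tendsto_nhds_unique hlim (((tendsto_truncProd hq0 hq1 ht z).sub
    (tendsto_truncProd hq0 hq1 ht (-z))).congr fun N => (hsum N).symm)

/-- The second sequence is bounded, and it is increasing because of the term `q^n g_n` in the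
recursion for `g_{n+2}`. -/
lemma exists_limit (hq0 : 0 < q) (hq1 : q < 1) (ht : 1 ≤ t) :
    ∃ L, Tendsto (normCoeff q t) atTop (𝓝 L) ∧
      Tendsto (fun K => (1 - q ^ (2 * K + 1)) * normCoeff q t K) atTop (𝓝 L) := by
  have hc := coeff_nonneg hq0 hq1 ht
  obtain ⟨C, hC⟩ := exists_normCoeff_le hq0 hq1 ht
  set s : ℕ → ℝ := fun K => (1 - q ^ (2 * K + 1)) * normCoeff q t K with hs
  have hmono : Monotone s := monotone_nat_of_le_succ fun K => by
    have hrec := coeff_rec (t := t) hq0 hq1 (2 * K + 1)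
    have e : s (K + 1) = (1 - q ^ (2 * K + 1 + 2)) * coeff q t (2 * K + 1 + 2) /
        (q ^ (2 * K + 1) * q ^ (K ^ 2)) := by
      simp only [hs, normCoeff]
      rw [← pow_add, show 2 * (K + 1) + 1 = 2 * K + 1 + 2 by ring,
        show (K + 1) ^ 2 = 2 * K + 1 + K ^ 2 by ring, mul_div_assoc]
    have e' : s K = q ^ (2 * K + 1) * ((1 - q ^ (2 * K + 1)) * coeff q t (2 * K + 1)) /
        (q ^ (2 * K + 1) * q ^ (K ^ 2)) := by
      rw [mul_div_mul_left _ _ (by positivity)]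
      simp only [hs, normCoeff, mul_div_assoc]
    rw [e, e', hrec]
    refine div_le_div_of_nonneg_right ?_ (by positivity)
    have h1 := hc (2 * K + 1)
    have h2 := hc (2 * K + 1 + 1)
    have h3 : 0 ≤ t * q ^ (2 * K + 1 + 1) * coeff q t (2 * K + 1 + 1) := by positivity
    have h4 : 0 ≤ q ^ (2 * K + 1) * (q ^ (2 * K + 1) * coeff q t (2 * K + 1)) := by positivity
    linarith
  have hbdd : BddAbove (Set.range s) := ⟨C, by
    rintro _ ⟨K, rfl⟩
    refine le_trans ?_ (hC K)
    exact mul_le_of_le_one_left (normCoeff_nonneg hq0 hq1 ht K)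
      (sub_le_self _ (by positivity))⟩
  have hlim := tendsto_atTop_ciSup hmono hbdd
  refine ⟨_, ?_, hlim⟩
  have hpow : Tendsto (fun K : ℕ => 1 - q ^ (2 * K + 1)) atTop (𝓝 1) := by
    have : Tendsto (fun K : ℕ => 2 * K + 1) atTop atTop :=
      tendsto_atTop_mono (fun K => show K ≤ 2 * K + 1 by lia) tendsto_id
    simpa using ((tendsto_pow_atTop_nhds_zero_of_lt_one hq0.le hq1).comp this).const_sub 1
  have := hlim.div hpow one_ne_zero
  rw [div_one] at this
  refine this.congr fun K => ?_
  exact mul_div_cancel_left₀ _ (one_sub_pow_pos hq0 hq1 (2 * K)).ne'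

/-! ### Weighted words without two consecutive zeros -/

/-- The weight of the letter `a` at position `n`, restricted to `a ≥ 1`. -/
noncomputable def posWt (q t : ℝ) (n a : ℕ) : ℝ := if a = 0 then 0 else t * (q ^ (n + 1)) ^ a

/-- The weight `t⁻¹` of the letter `0`, extended by zero to the other letters. -/
noncomputable def zeroWt (t : ℝ) (a : ℕ) : ℝ := if a = 0 then t⁻¹ else 0

/-- The weight of a word of length `n`: it vanishes if two consecutive letters are zero, and is a
product of letter weights otherwise. The flag selects the words that are empty or end in a non-zero
letter (`true`), or those that end in a zero (`false`); the weight is zero on the others. -/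
noncomputable def wordWt (q t : ℝ) : (n : ℕ) → Bool → (Fin n → ℕ) → ℝ
  | 0, true, _ => 1
  | 0, false, _ => 0
  | n + 1, true, v => posWt q t n (v (Fin.last n)) *
      (wordWt q t n true (Fin.init v) + wordWt q t n false (Fin.init v))
  | n + 1, false, v => zeroWt t (v (Fin.last n)) * wordWt q t n true (Fin.init v)

lemma posWt_nonneg (hq0 : 0 < q) (ht : 1 ≤ t) (n a : ℕ) : 0 ≤ posWt q t n a := by
  have : 0 < t := by linarith
  rw [posWt]; split_ifs <;> positivity

lemma zeroWt_nonneg (ht : 1 ≤ t) (a : ℕ) : 0 ≤ zeroWt t a := by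
  have : 0 < t := by linarith
  rw [zeroWt]; split_ifs <;> positivity

lemma wordWt_nonneg (hq0 : 0 < q) (ht : 1 ≤ t) :
    ∀ (n : ℕ) (b : Bool) (v : Fin n → ℕ), 0 ≤ wordWt q t n b v
  | 0, true, _ => by simp [wordWt]
  | 0, false, _ => by simp [wordWt]
  | n + 1, true, v => mul_nonneg (posWt_nonneg hq0 ht _ _)
      (add_nonneg (wordWt_nonneg hq0 ht n true _) (wordWt_nonneg hq0 ht n false _))
  | n + 1, false, v => mul_nonneg (zeroWt_nonneg ht _) (wordWt_nonneg hq0 ht n true _)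

/-- Splits off the last letter of a word. -/
lemma hasSum_snoc {n : ℕ} {φ : ℕ → ℝ} {w : (Fin n → ℕ) → ℝ} {x y : ℝ} (hφ0 : ∀ a, 0 ≤ φ a)
    (hw0 : ∀ v, 0 ≤ w v) (hφ : HasSum φ x) (hw : HasSum w y) :
    HasSum (fun v : Fin (n + 1) → ℕ => φ (v (Fin.last n)) * w (Fin.init v)) (x * y) := by
  rw [← (Fin.snocEquiv fun _ => ℕ).hasSum_iff]
  have h := hφ.mul hw (hφ.summable.mul_of_nonneg hw.summable hφ0 hw0)
  refine hasSum_of_eq h (fun p => ?_) rfl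
  simp [Fin.snocEquiv]

lemma hasSum_posWt (hq0 : 0 < q) (hq1 : q < 1) (n : ℕ) :
    HasSum (posWt q t n) (t * (1 - q ^ (n + 1))⁻¹ - t) := by
  have h := ((hasSum_geometric_of_lt_one (pow_nonneg hq0.le (n + 1))
    (pow_lt_one₀ hq0.le hq1 n.succ_ne_zero)).mul_left t).sub (hasSum_ite_eq 0 t)
  refine hasSum_of_eq h (fun a => ?_) rfl
  rw [posWt]; split_ifs with ha <;> simp [ha]

/-- The total weights of words obey the recursion defining `coeff`. -/
lemma hasSum_wordWt (hq0 : 0 < q) (hq1 : q < 1) (ht : 1 ≤ t) (n : ℕ) :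
    HasSum (wordWt q t n true) (q ^ n * coeff q t n) ∧
    HasSum (fun v => wordWt q t n true v + wordWt q t n false v)
      ((1 - q ^ (n + 1)) * coeff q t (n + 1) / t) := by
  have ht0 : t ≠ 0 := by linarith
  have hw := wordWt_nonneg hq0 ht
  induction n with
  | zero =>
    have h1 := coeff_one (t := t) hq1
    constructor
    · convert hasSum_unique (wordWt q t 0 true) using 1
      simp [wordWt, coeff]
    · convert hasSum_unique (fun v => wordWt q t 0 true v + wordWt q t 0 false v) using 1
      simp [wordWt, h1, ht0]
  | succ n ih =>
    have hT : HasSum (wordWt q t (n + 1) true) (q ^ (n + 1) * coeff q t (n + 1)) := by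
      have h := hasSum_snoc (posWt_nonneg hq0 ht n) (fun v => add_nonneg (hw n true v)
        (hw n false v)) (hasSum_posWt hq0 hq1 n) ih.2
      refine hasSum_of_eq h (fun v => rfl) ?_
      have := (one_sub_pow_pos hq0 hq1 n).ne'
      field_simp; ring
    refine ⟨hT, ?_⟩
    have h := hT.add (hasSum_snoc (zeroWt_nonneg ht) (hw n true) (hasSum_ite_eq 0 t⁻¹) ih.1)
    refine hasSum_of_eq h (fun v => rfl) ?_
    rw [coeff_rec hq0 hq1]
    field_simp

lemma wordWt_eq_zero (ω : ℕ → ℕ) {k n : ℕ} (h0 : ω k = 0) (h1 : ω (k + 1) = 0)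
    (hn : k + 2 ≤ n) (b : Bool) : wordWt q t n b (fun i => ω i) = 0 := by
  induction n, hn using Nat.le_induction generalizing b with
  | base => cases b <;> simp [wordWt, posWt, h0, h1, Fin.init]
  | succ n hn ih =>
    have e : (Fin.init fun i : Fin (n + 1) => ω i) = fun i : Fin n => ω i := rfl
    cases b <;> simp [wordWt, e, ih]

/-- The weight of the letter `a` at position `n`, which stands for the index `i = n + 1`. -/
noncomputable def letterWt (q t : ℝ) (n a : ℕ) : ℝ :=
  (q ^ (n + 1)) ^ a * if a = 0 then t⁻¹ else t

/-- The second part serves the induction: `ω n = 0` forces the preceding letter to be non-zero. -/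
lemma wordWt_eq_prod (ω : ℕ → ℕ) (hω : ∀ n, ¬(ω n = 0 ∧ ω (n + 1) = 0)) (n : ℕ) :
    wordWt q t n true (fun i => ω i) + wordWt q t n false (fun i => ω i) =
      ∏ k ∈ Finset.range n, letterWt q t k (ω k) ∧
    (ω n = 0 → wordWt q t n true (fun i => ω i) =
      ∏ k ∈ Finset.range n, letterWt q t k (ω k)) := by
  induction n with
  | zero => simp [wordWt]
  | succ n ih =>
    have e : (Fin.init fun i : Fin (n + 1) => ω i) = fun i : Fin n => ω i := rfl
    rw [Finset.prod_range_succ]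
    by_cases h : ω n = 0
    · refine ⟨?_, fun h' => absurd ⟨h, h'⟩ (hω n)⟩
      simp [wordWt, posWt, zeroWt, letterWt, h, e, ih.2 h, mul_comm]
    · have hT : wordWt q t (n + 1) true (fun i => ω i) =
          (∏ k ∈ Finset.range n, letterWt q t k (ω k)) * letterWt q t n (ω n) := by
        simp only [wordWt, e, ih.1, posWt, letterWt, Fin.val_last, h, if_false]; ring
      refine ⟨?_, fun _ => hT⟩
      rw [hT]
      simp [wordWt, zeroWt, h]

/-! ### Summation over `Ho` -/

/-- Monotone convergence for a sum of non-negative terms along an exhaustion of the index set. -/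
lemma hasSum_of_exhaustion {α : Type*} {f : α → ℝ} (hf : ∀ a, 0 ≤ f a) {X : ℕ → Set α}
    (hX : Monotone X) (hcov : ∀ a, ∃ K, a ∈ X K) {s : ℕ → ℝ} {L : ℝ}
    (hs : ∀ K, HasSum (fun a : X K => f a) (s K)) (hL : Tendsto s atTop (𝓝 L)) :
    HasSum f L := by
  have hs' : ∀ K, HasSum ((X K).indicator f) (s K) := fun K =>
    hasSum_subtype_iff_indicator.1 (hs K)
  have hind : ∀ K a, 0 ≤ (X K).indicator f a := fun K a => Set.indicator_nonneg (fun a _ => hf a) a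
  refine hasSum_of_isLUB_of_nonneg L hf ⟨?_, fun b hb => ?_⟩
  · rintro _ ⟨F, rfl⟩
    choose κ hκ using hcov
    refine ge_of_tendsto hL ?_
    filter_upwards [eventually_ge_atTop (F.sup κ)] with K hK
    refine le_trans (le_of_eq ?_) (sum_le_hasSum F (fun a _ => hind K a) (hs' K))
    refine Finset.sum_congr rfl fun a ha => ?_
    rw [Set.indicator_of_mem (hX ((Finset.le_sup ha).trans hK) (hκ a))]
  · refine le_of_tendsto' hL fun K => hasSum_le_of_sum_le (hs' K) fun F => ?_
    exact (Finset.sum_le_sum fun a _ => Set.indicator_le_self' (fun a _ => hf a) a).trans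
      (hb ⟨F, rfl⟩)

/-- The sequence `1, 0, 1, 0, …` with which the elements of `Ho` eventually agree. -/
def ground (n : ℕ) : ℕ := if (n + 1) % 2 = 1 then 1 else 0

/-- The elements of `Ho` that agree with the ground state from index `2K` on. -/
def level (K : ℕ) : Set Ho := {ω | ∀ n ≥ 2 * K, ω.1 n = ground n}

/-- The truncations of `A'fun` and `B'fun` to the first `2K` positions give a product of letter
weights. The ground state contributes `1 + 3 + … + (2K-1) = K²`, and
`2 (#{i even, ω ≥ 1} - #{i odd, ω = 0})` is the number of non-zero letters minus that of zeros. -/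
lemma weight_prod (hq0 : 0 < q) (ht : 1 ≤ t) (ω : ℕ → ℕ) (K : ℕ) :
    q ^ (∑ n ∈ Finset.range (2 * K), (if (n + 1) % 2 = 0 then ((n : ℤ) + 1) * (ω n : ℤ)
        else ((n : ℤ) + 1) * ((ω n : ℤ) - 1))) *
      t ^ (2 * ((∑ n ∈ Finset.range (2 * K), if (n + 1) % 2 = 0 ∧ 1 ≤ ω n then (1 : ℤ) else 0)
        - ∑ n ∈ Finset.range (2 * K), if (n + 1) % 2 = 1 ∧ ω n = 0 then (1 : ℤ) else 0)) =
    (∏ k ∈ Finset.range (2 * K), letterWt q t k (ω k)) / q ^ (K ^ 2) := by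
  have hq : q ≠ 0 := hq0.ne'
  have ht0 : t ≠ 0 := by linarith
  induction K with
  | zero => simp
  | succ K ih =>
    have m1 : (2 * K + 1) % 2 = 1 := by lia
    have m2 : (2 * K + 1 + 1) % 2 = 0 := by lia
    rw [show 2 * (K + 1) = 2 * K + 1 + 1 by ring]
    simp only [Finset.sum_range_succ _ (2 * K + 1), Finset.sum_range_succ _ (2 * K),
      Finset.prod_range_succ _ (2 * K + 1), Finset.prod_range_succ _ (2 * K)]
    set A := ∑ n ∈ Finset.range (2 * K), (if (n + 1) % 2 = 0 then ((n : ℤ) + 1) * (ω n : ℤ)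
        else ((n : ℤ) + 1) * ((ω n : ℤ) - 1))
    set B₁ := ∑ n ∈ Finset.range (2 * K), if (n + 1) % 2 = 0 ∧ 1 ≤ ω n then (1 : ℤ) else 0
    set B₂ := ∑ n ∈ Finset.range (2 * K), if (n + 1) % 2 = 1 ∧ ω n = 0 then (1 : ℤ) else 0
    set P := ∏ k ∈ Finset.range (2 * K), letterWt q t k (ω k)
    generalize ω (2 * K) = a
    generalize ω (2 * K + 1) = b
    simp only [m1, m2, one_ne_zero, zero_ne_one, if_true, if_false, true_and, false_and, add_zero]
    have eA : q ^ (A + (((2 * K : ℕ) : ℤ) + 1) * ((a : ℤ) - 1) +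
        (((2 * K + 1 : ℕ) : ℤ) + 1) * (b : ℤ)) =
        q ^ A * ((q ^ (2 * K + 1)) ^ a * (q ^ (2 * K + 1 + 1)) ^ b / q ^ (2 * K + 1)) := by
      rw [← pow_mul, ← pow_mul, ← zpow_natCast, ← zpow_natCast, ← zpow_natCast, ← zpow_add₀ hq,
        ← zpow_sub₀ hq, ← zpow_add₀ hq]
      congr 1; push_cast; ring
    have eB : t ^ (2 * (B₁ + (if 1 ≤ b then (1 : ℤ) else 0) -
        (B₂ + (if a = 0 then (1 : ℤ) else 0)))) =
        t ^ (2 * (B₁ - B₂)) * ((if a = 0 then t⁻¹ else t) * if b = 0 then t⁻¹ else t) := by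
      rw [show 2 * (B₁ + (if 1 ≤ b then (1 : ℤ) else 0) - (B₂ + (if a = 0 then (1 : ℤ) else 0))) =
        2 * (B₁ - B₂) + 2 * ((if 1 ≤ b then (1 : ℤ) else 0) - if a = 0 then (1 : ℤ) else 0) by ring,
        zpow_add₀ ht0]
      congr 1
      rcases Nat.eq_zero_or_pos a with ha | ha <;> rcases Nat.eq_zero_or_pos b with hb | hb
      · simp [ha, hb, zpow_neg]
        rw [← mul_inv, ← sq]
      · simp [ha, hb.ne', Nat.one_le_iff_ne_zero, ht0]
      · simp [ha.ne', hb, ht0]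
      · simp [ha.ne', hb.ne', Nat.one_le_iff_ne_zero]
        rw [← sq]
    rw [eA, eB, show (K + 1) ^ 2 = K ^ 2 + (2 * K + 1) by ring, pow_add q (K ^ 2)]
    simp only [letterWt]
    rw [mul_mul_mul_comm, ih]
    field_simp

lemma weight_level (hq0 : 0 < q) (ht : 1 ≤ t) {K : ℕ} {ω : Ho} (hω : ω ∈ level K) :
    q ^ A'fun ω.1 * t ^ B'fun ω.1 =
      (∏ k ∈ Finset.range (2 * K), letterWt q t k (ω.1 k)) / q ^ (K ^ 2) := by
  rw [← weight_prod hq0 ht, A'fun, B'fun]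
  have hsupp : ∀ f : ℕ → ℤ, (∀ n ≥ 2 * K, f n = 0) →
      ∑ᶠ n, f n = ∑ n ∈ Finset.range (2 * K), f n := fun f hf =>
    finsum_eq_sum_of_support_subset f fun n hn => by
      by_contra h
      exact hn (hf n (by simpa using h))
  rw [hsupp, hsupp, hsupp] <;> intro n hn <;> have h := hω n hn <;> rw [h, ground] <;>
    rcases Nat.mod_two_eq_zero_or_one (n + 1) with h2 | h2 <;> simp [h2]

lemma hasSum_level (hq0 : 0 < q) (hq1 : q < 1) (ht : 1 ≤ t) (K : ℕ) :
    HasSum (fun ω : level K => q ^ A'fun ω.1.1 * t ^ B'fun ω.1.1)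
      ((1 - q ^ (2 * K + 1)) * normCoeff q t K / t) := by
  let r : level K → (Fin (2 * K) → ℕ) := fun ω i => ω.1.1 i
  have hr : Function.Injective r := fun ω ω' h => by
    refine Subtype.ext (Subtype.ext (funext fun n => ?_))
    rcases lt_or_ge n (2 * K) with hn | hn
    · exact congrFun h ⟨n, hn⟩
    · rw [ω.2 n hn, ω'.2 n hn]
  have h := (hasSum_wordWt hq0 hq1 ht (2 * K)).2
  rw [← hr.hasSum_iff] at h
  · refine hasSum_of_eq (h.div_const (q ^ (K ^ 2))) (fun ω => ?_) ?_
    · rw [weight_level hq0 ht ω.2, ← (wordWt_eq_prod ω.1.1 ω.1.2.1 (2 * K)).1]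
      rfl
    · rw [normCoeff]; ring
  · intro v hv
    -- the word `v` continued by the ground state
    let ω : ℕ → ℕ := fun n => if h : n < 2 * K then v ⟨n, h⟩ else ground n
    have hvω : v = fun i : Fin (2 * K) => ω i := by
      funext i; simp [ω]
    have htail : ∀ n ≥ 2 * K, ω n = ground n := fun n hn => by
      simp [ω, Nat.not_lt.2 hn]
    by_cases hadm : ∀ n, ¬(ω n = 0 ∧ ω (n + 1) = 0)
    · exact absurd ⟨⟨⟨ω, hadm, 2 * K, htail⟩, htail⟩, hvω.symm⟩ hv
    · push Not at hadm
      obtain ⟨k, h0, h1⟩ := hadm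
      have hk : k + 2 ≤ 2 * K := by
        by_contra hlt
        rw [htail (k + 1) (by lia), ground] at h1
        -- Position `k + 1` lies in the tail, so it vanishes only if `k` is even; but then `k` is a
        -- tail position as well, `2K` being even, and the ground state equals `1` there.
        have hodd : (k + 1) % 2 = 1 := by
          by_contra h2
          rw [if_pos (by lia)] at h1
          exact one_ne_zero h1
        rw [htail k (by lia), ground, if_pos hodd] at h0
        exact one_ne_zero h0
      rw [hvω, wordWt_eq_zero ω h0 h1 hk, wordWt_eq_zero ω h0 h1 hk, add_zero]

lemma Sodd_eq (hq0 : 0 < q) (hq1 : q < 1) (ht : 1 ≤ t) {L : ℝ}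
    (hL : Tendsto (fun K => (1 - q ^ (2 * K + 1)) * normCoeff q t K) atTop (𝓝 L)) :
    Sodd q t = L / t := by
  have ht0 : 0 < t := by linarith
  have h : HasSum (fun ω : Ho => q ^ A'fun ω.1 * t ^ B'fun ω.1) (L / t) := by
    refine hasSum_of_exhaustion (X := level) (fun ω => by positivity) ?_ ?_
      (hasSum_level hq0 hq1 ht) (hL.div_const t)
    · intro K K' hK ω hω n hn
      exact hω n (by lia)
    · rintro ⟨ω, hadm, N, hN⟩
      exact ⟨N, fun n hn => hN n (by lia)⟩
  exact h.tsum_eq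

end
end OddTheta

theorem statement1 (q t z : ℝ) (hq0 : 0 < q) (hq1 : q < 1) (ht : 1 ≤ t) (hz : 0 < z) :
    Summable (fun ℓ : ℤ => q ^ ((ℓ + 1) ^ 2) * z ^ (2 * ℓ + 1)) ∧
    Multipliable (fun i : ℕ =>
      (1 + t * z * q ^ (i + 1) + z ^ 2 * q ^ (2 * (i + 1))) *
      (1 + t * z⁻¹ * q ^ i + z⁻¹ ^ 2 * q ^ (2 * i))) ∧
    Multipliable (fun i : ℕ =>
      (1 - t * z * q ^ (i + 1) + z ^ 2 * q ^ (2 * (i + 1))) *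
      (1 - t * z⁻¹ * q ^ i + z⁻¹ ^ 2 * q ^ (2 * i))) ∧
    2 * t * Sodd q t * (∑' ℓ : ℤ, q ^ ((ℓ + 1) ^ 2) * z ^ (2 * ℓ + 1)) =
      (∏' i : ℕ, (1 + t * z * q ^ (i + 1) + z ^ 2 * q ^ (2 * (i + 1))) *
        (1 + t * z⁻¹ * q ^ i + z⁻¹ ^ 2 * q ^ (2 * i))) -
      (∏' i : ℕ, (1 - t * z * q ^ (i + 1) + z ^ 2 * q ^ (2 * (i + 1))) *
        (1 - t * z⁻¹ * q ^ i + z⁻¹ ^ 2 * q ^ (2 * i))) := by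
  have ht0 : t ≠ 0 := by linarith
  have e1 : ∀ (i : ℕ), OddTheta.quad t (q ^ i * (q * z)) * OddTheta.quad t (q ^ i * z⁻¹) =
      (1 + t * z * q ^ (i + 1) + z ^ 2 * q ^ (2 * (i + 1))) *
      (1 + t * z⁻¹ * q ^ i + z⁻¹ ^ 2 * q ^ (2 * i)) := fun i => by
    rw [OddTheta.quad, OddTheta.quad]; ring
  have e2 : ∀ (i : ℕ), OddTheta.quad t (q ^ i * (q * -z)) * OddTheta.quad t (q ^ i * (-z)⁻¹) =
      (1 - t * z * q ^ (i + 1) + z ^ 2 * q ^ (2 * (i + 1))) *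
      (1 - t * z⁻¹ * q ^ i + z⁻¹ ^ 2 * q ^ (2 * i)) := fun i => by
    rw [OddTheta.quad, OddTheta.quad, inv_neg]; ring
  refine ⟨OddTheta.summable_theta hq0 hq1 hz,
    ((OddTheta.multipliable_quad hq0 hq1 _).mul (OddTheta.multipliable_quad hq0 hq1 _)).congr e1,
    ((OddTheta.multipliable_quad hq0 hq1 _).mul (OddTheta.multipliable_quad hq0 hq1 _)).congr e2,
    ?_⟩
  obtain ⟨L, hL, hL'⟩ := OddTheta.exists_limit hq0 hq1 ht
  rw [OddTheta.Sodd_eq hq0 hq1 ht hL', mul_assoc 2 t, mul_div_cancel₀ _ ht0,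
    OddTheta.theta_identity hq0 hq1 ht hz hL, tprod_congr e1, tprod_congr e2]
end
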